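/- arXiv:1704.03761 — 3 statements merged into one kernel-verified Lean document; each statement's English description precedes it below -/
import Mathlib

section
/- Let g ∈ 𝕃(r_1,r_2) be of the form g(X_1,X_2) = a(X_1)·b(X_2), where the reduction of X_1^{h_1}·a modulo X_1^{r_1}−1 divides X_1^{r_1}−1 for some h_1 ∈ ℕ, Δ(M(a)) = |Z̄(a)|, the reduction of X_2^{h_2}·b modulo X_2^{r_2}−1 divides X_2^{r_2}−1 for some h_2 ∈ ℕ, and Δ(M(b)) = |Z̄(b)| (i.e., a and b satisfy the one-variable condition that their BCH apparent distance equals the number of their nonzeros among roots of unity). Set M = M(g). Then: (1) Z̄(g) = Z̄_1 × Z̄_2 (the set of nonzeros of g is the product of the projections); (2) Δ(M) = Δ(M(a))·Δ(M(b)) = |Z̄(g)|; (3) Δ_1(M) = Δ_2(M) = Δ(M) = |Z̄(g)|; (4) Δ(M(a)) = ε_2(M) = ω_1(M); (5) Δ(M(b)) = ε_1(M) = ω_2(M). -/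
/-!
The support of `M(a·b)` is the product of the supports of `a` and `b`, and the value of `a·b` at
a point is the product of the values of `a` and `b`. Divisibility of `X^r - 1` forces `a` and `b`
to be nonzero, so `supp_1(M)` is the support of `a`, every nonzero row of `M` is a nonzero scalar
multiple of `b`, and symmetrically for columns; since the BCH apparent distance depends only on
supports, this identifies `ω_j(M)` and `ε_j(M)` with `Δ(M(a))` or `Δ(M(b))`. On the other side
`Z̄(g) = Z̄(a) × Z̄(b)` (`nonzeros2_prodPoly`), and comparing the two gives all the claims.
-/

open scoped Classical
open Polynomial

noncomputable section

namespace DS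

/-- Hamming weight of a vector. -/
def wt {ι R : Type} [Fintype ι] [Zero R] (v : ι → R) : ℕ :=
  (Finset.univ.filter fun i => v i ≠ 0).card

/-- Minimum (Hamming) distance of a set of codewords. -/
def minDist {ι R : Type} [Fintype ι] [Zero R] (C : Set (ι → R)) : ℕ :=
  sInf (wt '' (C \ {0}))

/-! ### Univariate (cyclic) setting -/

/-- cyclic shift = multiplication by `X` in `F[X]/(X^n-1)` -/
def shiftOne {n : ℕ} {R : Type} (v : ZMod n → R) : ZMod n → R := fun i => v (i - 1)

/-- A cyclic code: an ideal of `F[X]/(X^n-1)`, viewed through coefficient vectors. -/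
def IsCyclicCode {F : Type} [Field F] {n : ℕ} (C : Set (ZMod n → F)) : Prop :=
  (0 : ZMod n → F) ∈ C ∧ (∀ u ∈ C, ∀ v ∈ C, u + v ∈ C) ∧
    (∀ (a : F), ∀ v ∈ C, a • v ∈ C) ∧ (∀ v ∈ C, shiftOne v ∈ C)

/-- Evaluation of a (coefficient vector of a) polynomial of `L(n)` at `β`. -/
def evalV {n : ℕ} [NeZero n] {R : Type} [CommRing R] (v : ZMod n → R) (β : R) : R :=
  ∑ i : ZMod n, v i * β ^ i.val

/-- Evaluation of an `F`-polynomial at a point of an extension `L`. -/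
def evalVF {F L : Type} [Field F] [CommRing L] [Algebra F L] {n : ℕ} [NeZero n]
    (v : ZMod n → F) (β : L) : L :=
  ∑ i : ZMod n, algebraMap F L (v i) * β ^ i.val

/-- Defining set of a cyclic code with respect to `α`. -/
def defSet1 {F L : Type} [Field F] [CommRing L] [Algebra F L] {n : ℕ} [NeZero n]
    (α : L) (C : Set (ZMod n → F)) : Set (ZMod n) :=
  {i | ∀ v ∈ C, evalVF v (α ^ i.val) = 0}

/-- Discrete Fourier transform of an `F`-codeword with respect to `α`. -/
def dft1 {F L : Type} [Field F] [CommRing L] [Algebra F L] {n : ℕ} [NeZero n]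
    (α : L) (c : ZMod n → F) : ZMod n → L :=
  fun j => evalVF c (α ^ j.val)

/-- Inverse discrete Fourier transform. -/
def invDFT1 {L : Type} [Field L] {n : ℕ} [NeZero n] (α : L) (g : ZMod n → L) :
    ZMod n → L :=
  fun j => (n : L)⁻¹ * evalV g (α⁻¹ ^ j.val)

/-- The set `Z̄(v)` of `n`-th roots of unity at which `v` does not vanish. -/
def nonzeros1 {L : Type} [CommRing L] {n : ℕ} [NeZero n] (v : ZMod n → L) : Set L :=
  {β | β ^ n = 1 ∧ evalV v β ≠ 0}

/-- Multiplication (cyclic convolution) in `R[X]/(X^n-1)`. -/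
def conv1 {n : ℕ} [NeZero n] {R : Type} [CommRing R] (u v : ZMod n → R) : ZMod n → R :=
  fun i => ∑ j : ZMod n, u j * v (i - j)

/-- Coefficient vector of the reduction of `X^h·v` modulo `X^n-1`. -/
def shiftBy {n : ℕ} {R : Type} (h : ℕ) (v : ZMod n → R) : ZMod n → R :=
  fun i => v (i - (h : ZMod n))

/-- The polynomial (of degree `< n`) with coefficient vector `v`. -/
def toPoly {L : Type} [CommRing L] {n : ℕ} [NeZero n] (v : ZMod n → L) : Polynomial L :=
  ∑ i : ZMod n, Polynomial.C (v i) * Polynomial.X ^ i.val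

/-! ### ds-bounds -/

/-- A defining-set bound (ds-bound) for the minimum distance of cyclic codes over `F`. -/
structure DSBound (F : Type) [Field F] [Fintype F] where
  rel : ∀ n : ℕ, Set (ZMod n) → ℕ → Prop
  bound : ∀ (n : ℕ) [NeZero n] (C : Set (ZMod n → F)), IsCyclicCode C → C ≠ {0} →
    ∀ α : AlgebraicClosure F, IsPrimitiveRoot α n →
      ∀ (N : Set (ZMod n)) (b : ℕ), N ⊆ defSet1 α C → rel n N b → 1 ≤ b ∧ b ≤ minDist C
  mono : ∀ (n : ℕ) (N M : Set (ZMod n)), N ⊆ M → ∀ b, rel n N b → rel n M b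
  one' : ∀ (n : ℕ) (N : Set (ZMod n)), rel n N 1
  bdd : ∀ (n : ℕ) (N : Set (ZMod n)), BddAbove {b | rel n N b}

/-- The optimal ds-bound `δ̄` associated to a ds-bound `δ`. -/
def optB {F : Type} [Field F] [Fintype F] (δ : DSBound F) (n : ℕ) (N : Set (ZMod n)) : ℕ :=
  sSup {b | δ.rel n N b}

/-- Apparent distance of a vector with respect to a set `B` of ds-bounds. -/
def DeltaV {F : Type} [Field F] [Fintype F] (B : Set (DSBound F)) {L : Type} [Zero L]
    {n : ℕ} (v : ZMod n → L) : ℕ :=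
  if v = 0 then 0 else sSup ((fun δ => optB δ n {i | v i ≠ 0}ᶜ) '' B)

/-- `(B,α)`-apparent distance of a cyclic code. -/
def DeltaCodeAt1 {F : Type} [Field F] [Fintype F] {L : Type} [Field L] [Algebra F L]
    {n : ℕ} [NeZero n] (B : Set (DSBound F)) (α : L) (C : Set (ZMod n → F)) : ℕ :=
  sInf {m | ∃ c ∈ C, c ≠ 0 ∧ m = DeltaV B (dft1 α c)}

/-! ### Hypermatrices (several variables) -/

/-- Hypercolumn `H_M(j,k)` of a hypermatrix. -/
def hyperCol {L : Type} {s : ℕ} {r : Fin (s + 1) → ℕ} (M : (∀ i, ZMod (r i)) → L)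
    (j : Fin (s + 1)) (k : ZMod (r j)) : (∀ i : Fin s, ZMod (r (j.succAbove i))) → L :=
  fun x => M (j.insertNth k x)

/-- The `B`-apparent distance of an `s`-dimensional hypermatrix. -/
def DeltaH {F : Type} [Field F] [Fintype F] {L : Type} [Zero L] (B : Set (DSBound F)) :
    (s : ℕ) → (r : Fin s → ℕ) → ((∀ i, ZMod (r i)) → L) → ℕ
  | 0, _, M => if M = 0 then 0 else 1
  | s + 1, r, M =>
    if M = 0 then 0
    else
      sSup (Set.range fun j : Fin (s + 1) =>
        sSup ((fun δ => optB δ (r j) {k : ZMod (r j) | hyperCol M j k ≠ 0}ᶜ) '' B) *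
        sSup ((fun k : ZMod (r j) =>
            DeltaH B s (fun i => r (j.succAbove i)) (hyperCol M j k)) ''
          {k : ZMod (r j) | hyperCol M j k ≠ 0}))

/-- `supp_j(M)`. -/
def suppj {L : Type} [Zero L] {s : ℕ} {r : Fin (s + 1) → ℕ}
    (M : (∀ i, ZMod (r i)) → L) (j : Fin (s + 1)) : Set (ZMod (r j)) :=
  {k | hyperCol M j k ≠ 0}

/-- `ω_j(M)`. -/
def omegaj {F : Type} [Field F] [Fintype F] {L : Type} [Zero L] {s : ℕ}
    {r : Fin (s + 1) → ℕ} (B : Set (DSBound F)) (M : (∀ i, ZMod (r i)) → L)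
    (j : Fin (s + 1)) : ℕ :=
  sSup ((fun δ => optB δ (r j) (suppj M j)ᶜ) '' B)

/-- `ε_j(M)`. -/
def epsj {F : Type} [Field F] [Fintype F] {L : Type} [Zero L] {s : ℕ}
    {r : Fin (s + 1) → ℕ} (B : Set (DSBound F)) (M : (∀ i, ZMod (r i)) → L)
    (j : Fin (s + 1)) : ℕ :=
  sSup ((fun k => DeltaH B s (fun i => r (j.succAbove i)) (hyperCol M j k)) '' suppj M j)

/-- `Δ_j(M) = ω_j(M)·ε_j(M)`. -/
def Deltaj {F : Type} [Field F] [Fintype F] {L : Type} [Zero L] {s : ℕ}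
    {r : Fin (s + 1) → ℕ} (B : Set (DSBound F)) (M : (∀ i, ZMod (r i)) → L)
    (j : Fin (s + 1)) : ℕ :=
  omegaj B M j * epsj B M j

/-! ### Multivariate polynomials, DFT, abelian codes -/

/-- Evaluation of a multivariate polynomial (given by its coefficient hypermatrix). -/
def mEval {L : Type} [CommRing L] {s : ℕ} {r : Fin s → ℕ} [∀ i, NeZero (r i)]
    (f : (∀ i, ZMod (r i)) → L) (β : Fin s → L) : L :=
  ∑ j : ∀ i, ZMod (r i), f j * ∏ i, β i ^ (j i).val

/-- Multivariate discrete Fourier transform of an `F`-codeword. -/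
def mDFT {F L : Type} [Field F] [CommRing L] [Algebra F L] {s : ℕ} {r : Fin s → ℕ}
    [∀ i, NeZero (r i)] (α : Fin s → L) (c : (∀ i, ZMod (r i)) → F) :
    (∀ i, ZMod (r i)) → L :=
  fun j => ∑ k : ∀ i, ZMod (r i), algebraMap F L (c k) * ∏ i, (α i ^ (j i).val) ^ (k i).val

/-- Multivariate inverse discrete Fourier transform. -/
def mInvDFT {L : Type} [Field L] {s : ℕ} {r : Fin s → ℕ} [∀ i, NeZero (r i)]
    (α : Fin s → L) (g : (∀ i, ZMod (r i)) → L) : (∀ i, ZMod (r i)) → L :=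
  fun j => (∏ i, (r i : L))⁻¹ *
    ∑ k : ∀ i, ZMod (r i), g k * ∏ i, ((α i)⁻¹ ^ (j i).val) ^ (k i).val

/-- `Z̄(f)`: the points of `R` (products of roots of unity) where `f` does not vanish. -/
def mNonzeros {L : Type} [CommRing L] {s : ℕ} {r : Fin s → ℕ} [∀ i, NeZero (r i)]
    (f : (∀ i, ZMod (r i)) → L) : Set (Fin s → L) :=
  {β | (∀ i, β i ^ r i = 1) ∧ mEval f β ≠ 0}

/-- Multiplication by `X_t` in `F(r_1,…,r_s)`. -/
def mShift {s : ℕ} {r : Fin s → ℕ} {R : Type} (t : Fin s) (v : (∀ i, ZMod (r i)) → R) :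
    (∀ i, ZMod (r i)) → R :=
  fun j => v (fun i => if i = t then j i - 1 else j i)

/-- An abelian code: an ideal of `F[X_1,…,X_s]/(X_i^{r_i}-1)`. -/
def IsAbelianCode {F : Type} [Field F] {s : ℕ} {r : Fin s → ℕ}
    (C : Set ((∀ i, ZMod (r i)) → F)) : Prop :=
  (0 : (∀ i, ZMod (r i)) → F) ∈ C ∧ (∀ u ∈ C, ∀ v ∈ C, u + v ∈ C) ∧
    (∀ (a : F), ∀ v ∈ C, a • v ∈ C) ∧ (∀ t : Fin s, ∀ v ∈ C, mShift t v ∈ C)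

/-- Multiplication (multivariate cyclic convolution) in `R(r_1,…,r_s)`. -/
def mConv {s : ℕ} {r : Fin s → ℕ} [∀ i, NeZero (r i)] {R : Type} [CommRing R]
    (u v : (∀ i, ZMod (r i)) → R) : (∀ i, ZMod (r i)) → R :=
  fun j => ∑ k : ∀ i, ZMod (r i), u k * v (fun i => j i - k i)

/-- `(B,ᾱ)`-apparent distance of an abelian code. -/
def DeltaCodeAt {F : Type} [Field F] [Fintype F] {L : Type} [Field L] [Algebra F L]
    {s : ℕ} {r : Fin s → ℕ} [∀ i, NeZero (r i)] (B : Set (DSBound F)) (α : Fin s → L)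
    (C : Set ((∀ i, ZMod (r i)) → F)) : ℕ :=
  sInf {m | ∃ c ∈ C, c ≠ 0 ∧ m = DeltaH B s r (mDFT α c)}

/-- `B`-apparent distance of an abelian code. -/
def DeltaCode {F : Type} [Field F] [Fintype F] (L : Type) [Field L] [Algebra F L]
    {s : ℕ} {r : Fin s → ℕ} [∀ i, NeZero (r i)] (B : Set (DSBound F))
    (C : Set ((∀ i, ZMod (r i)) → F)) : ℕ :=
  sSup {m | ∃ α : Fin s → L, (∀ i, IsPrimitiveRoot (α i) (r i)) ∧ m = DeltaCodeAt B α C}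

/-! ### q-orbits, afforded hypermatrices, B-mad -/

/-- The `q`-orbit of a tuple of indices. -/
def qOrbit (q : ℕ) {s : ℕ} {r : Fin s → ℕ} (a : ∀ i, ZMod (r i)) :
    Set (∀ i, ZMod (r i)) :=
  {x | ∃ t : ℕ, x = fun i => (q : ZMod (r i)) ^ t * a i}

/-- `D` is a union of `q`-orbits. -/
def IsUnionOfQOrbits (q : ℕ) {s : ℕ} {r : Fin s → ℕ} (D : Set (∀ i, ZMod (r i))) : Prop :=
  ∀ a ∈ D, qOrbit q a ⊆ D

/-- The hypermatrix afforded by `D` (entry `0` on `D`, entry `1` outside `D`). -/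
def afforded {L : Type} [Zero L] [One L] {s : ℕ} {r : Fin s → ℕ}
    (D : Set (∀ i, ZMod (r i))) : (∀ i, ZMod (r i)) → L :=
  fun p => if p ∈ D then 0 else 1

/-- The minimum `B`-apparent distance `B-mad(M)` of a hypermatrix. -/
def Bmad {F : Type} [Field F] [Fintype F] {L : Type} [Zero L] {s : ℕ} {r : Fin s → ℕ}
    (B : Set (DSBound F)) (q : ℕ) (M : (∀ i, ZMod (r i)) → L) : ℕ :=
  sInf {m | ∃ P : (∀ i, ZMod (r i)) → L, P ≠ 0 ∧ IsUnionOfQOrbits q {p | P p ≠ 0} ∧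
    {p | P p ≠ 0} ⊆ {p | M p ≠ 0} ∧ m = DeltaH B s r P}

end DS
/-! ### Two-variable setting -/

namespace DS2
open DS

variable {r₁ r₂ : ℕ}

/-- Row `H_M(1,k)` of a matrix, i.e. the coefficient vector of `g_{1,k}`. -/
def row {L : Type} (M : ZMod r₁ × ZMod r₂ → L) (k : ZMod r₁) : ZMod r₂ → L :=
  fun j => M (k, j)

/-- Column `H_M(2,k)` of a matrix, i.e. the coefficient vector of `g_{2,k}`. -/
def col {L : Type} (M : ZMod r₁ × ZMod r₂ → L) (k : ZMod r₂) : ZMod r₁ → L :=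
  fun i => M (i, k)

/-- Row support `supp_1(M)`. -/
def supp1 {L : Type} [Zero L] (M : ZMod r₁ × ZMod r₂ → L) : Set (ZMod r₁) :=
  {k | row M k ≠ 0}

/-- Column support `supp_2(M)`. -/
def supp2 {L : Type} [Zero L] (M : ZMod r₁ × ZMod r₂ → L) : Set (ZMod r₂) :=
  {k | col M k ≠ 0}

variable {F : Type} [Field F] [Fintype F]

def omega1 {L : Type} [Zero L] (B : Set (DSBound F)) (M : ZMod r₁ × ZMod r₂ → L) : ℕ :=
  sSup ((fun δ => optB δ r₁ (supp1 M)ᶜ) '' B)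

def omega2 {L : Type} [Zero L] (B : Set (DSBound F)) (M : ZMod r₁ × ZMod r₂ → L) : ℕ :=
  sSup ((fun δ => optB δ r₂ (supp2 M)ᶜ) '' B)

def eps1 {L : Type} [Zero L] (B : Set (DSBound F)) (M : ZMod r₁ × ZMod r₂ → L) : ℕ :=
  sSup ((fun k => DeltaV B (row M k)) '' supp1 M)

def eps2 {L : Type} [Zero L] (B : Set (DSBound F)) (M : ZMod r₁ × ZMod r₂ → L) : ℕ :=
  sSup ((fun k => DeltaV B (col M k)) '' supp2 M)

/-- `B`-apparent distance of a two-variable matrix. -/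
def Delta2 {L : Type} [Zero L] (B : Set (DSBound F)) (M : ZMod r₁ × ZMod r₂ → L) : ℕ :=
  if M = 0 then 0 else max (omega1 B M * eps1 B M) (omega2 B M * eps2 B M)

/-! ### the BCH ds-bound, concretely -/

/-- `N` contains `a-1` consecutive integers modulo `n`. -/
def HasConsecutive {n : ℕ} (N : Set (ZMod n)) (a : ℕ) : Prop :=
  ∃ i0 : ZMod n, ∀ t : ℕ, t < a - 1 → i0 + (t : ZMod n) ∈ N

/-- The BCH ds-bound relation `(N,a) ∈ (δ_BCH)_n`. -/
def bchRel {n : ℕ} (N : Set (ZMod n)) (a : ℕ) : Prop :=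
  a = 1 ∨ (2 ≤ a ∧ HasConsecutive N a)

/-- The optimal BCH ds-bound `δ̄_BCH`. -/
def bchOpt (n : ℕ) (N : Set (ZMod n)) : ℕ := sSup {a | bchRel N a}

/-- BCH apparent distance of a vector. -/
def bchV {L : Type} [Zero L] {n : ℕ} (v : ZMod n → L) : ℕ :=
  if v = 0 then 0 else bchOpt n {i | v i ≠ 0}ᶜ

def bchOmega1 {L : Type} [Zero L] (M : ZMod r₁ × ZMod r₂ → L) : ℕ :=
  bchOpt r₁ (supp1 M)ᶜ

def bchOmega2 {L : Type} [Zero L] (M : ZMod r₁ × ZMod r₂ → L) : ℕ :=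
  bchOpt r₂ (supp2 M)ᶜ

def bchEps1 {L : Type} [Zero L] (M : ZMod r₁ × ZMod r₂ → L) : ℕ :=
  sSup ((fun k => bchV (row M k)) '' supp1 M)

def bchEps2 {L : Type} [Zero L] (M : ZMod r₁ × ZMod r₂ → L) : ℕ :=
  sSup ((fun k => bchV (col M k)) '' supp2 M)

/-- `Δ_1(M)` for the BCH bound. -/
def bchD1 {L : Type} [Zero L] (M : ZMod r₁ × ZMod r₂ → L) : ℕ := bchOmega1 M * bchEps1 M

/-- `Δ_2(M)` for the BCH bound. -/
def bchD2 {L : Type} [Zero L] (M : ZMod r₁ × ZMod r₂ → L) : ℕ := bchOmega2 M * bchEps2 M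

/-- BCH apparent distance of a two-variable matrix. -/
def bchDelta {L : Type} [Zero L] (M : ZMod r₁ × ZMod r₂ → L) : ℕ :=
  if M = 0 then 0 else max (bchD1 M) (bchD2 M)

/-! ### bivariate polynomials, DFT, codes -/

/-- Evaluation of a bivariate polynomial at `(u,v)`. -/
def eval2 {L : Type} [CommRing L] [NeZero r₁] [NeZero r₂] (g : ZMod r₁ × ZMod r₂ → L)
    (u v : L) : L :=
  ∑ p : ZMod r₁ × ZMod r₂, g p * u ^ p.1.val * v ^ p.2.val

/-- Bivariate DFT of an `F`-codeword. -/
def dft2 {F L : Type} [Field F] [CommRing L] [Algebra F L] [NeZero r₁] [NeZero r₂]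
    (α₁ α₂ : L) (c : ZMod r₁ × ZMod r₂ → F) : ZMod r₁ × ZMod r₂ → L :=
  fun j => ∑ p : ZMod r₁ × ZMod r₂,
    algebraMap F L (c p) * (α₁ ^ j.1.val) ^ p.1.val * (α₂ ^ j.2.val) ^ p.2.val

/-- Bivariate inverse DFT. -/
def invDFT2 {L : Type} [Field L] [NeZero r₁] [NeZero r₂] (α₁ α₂ : L)
    (g : ZMod r₁ × ZMod r₂ → L) : ZMod r₁ × ZMod r₂ → L :=
  fun j => ((r₁ : L) * (r₂ : L))⁻¹ * eval2 g (α₁⁻¹ ^ j.1.val) (α₂⁻¹ ^ j.2.val)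

/-- `Z̄(g)` for a bivariate polynomial. -/
def nonzeros2 {L : Type} [CommRing L] [NeZero r₁] [NeZero r₂]
    (g : ZMod r₁ × ZMod r₂ → L) : Set (L × L) :=
  {p | p.1 ^ r₁ = 1 ∧ p.2 ^ r₂ = 1 ∧ eval2 g p.1 p.2 ≠ 0}

/-- Multiplication (convolution) in `L(r₁,r₂)`. -/
def conv2 {L : Type} [CommRing L] [NeZero r₁] [NeZero r₂]
    (u w : ZMod r₁ × ZMod r₂ → L) : ZMod r₁ × ZMod r₂ → L :=
  fun p => ∑ t : ZMod r₁ × ZMod r₂, u t * w (p.1 - t.1, p.2 - t.2)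

/-- The coefficient matrix of the product `a(X₁)·b(X₂)`. -/
def prodPoly {L : Type} [Mul L] (a : ZMod r₁ → L) (b : ZMod r₂ → L) :
    ZMod r₁ × ZMod r₂ → L :=
  fun p => a p.1 * b p.2

/-- `g(X₁,v)`: the coefficient vector in `X₁` of `g` with `X₂` evaluated at `v`. -/
def secEval {L : Type} [CommRing L] [NeZero r₂] (g : ZMod r₁ × ZMod r₂ → L) (v : L) :
    ZMod r₁ → L :=
  fun i => evalV (row g i) v

/-- `g(u,X₂)`: the coefficient vector in `X₂` of `g` with `X₁` evaluated at `u`. -/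
def fstEval {L : Type} [CommRing L] [NeZero r₁] (g : ZMod r₁ × ZMod r₂ → L) (u : L) :
    ZMod r₂ → L :=
  fun j => evalV (col g j) u

/-- Defining set of a bivariate abelian code. -/
def defSet2 {F L : Type} [Field F] [CommRing L] [Algebra F L] [NeZero r₁] [NeZero r₂]
    (α₁ α₂ : L) (C : Set (ZMod r₁ × ZMod r₂ → F)) : Set (ZMod r₁ × ZMod r₂) :=
  {j | ∀ c ∈ C, dft2 α₁ α₂ c j = 0}

/-- Multiplication by `X₁`. -/
def shiftX {R : Type} (v : ZMod r₁ × ZMod r₂ → R) : ZMod r₁ × ZMod r₂ → R :=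
  fun p => v (p.1 - 1, p.2)

/-- Multiplication by `X₂`. -/
def shiftY {R : Type} (v : ZMod r₁ × ZMod r₂ → R) : ZMod r₁ × ZMod r₂ → R :=
  fun p => v (p.1, p.2 - 1)

/-- A bivariate abelian code: an ideal of `F[X₁,X₂]/(X₁^{r₁}-1, X₂^{r₂}-1)`. -/
def IsAbelianCode2 {F : Type} [Field F] (C : Set (ZMod r₁ × ZMod r₂ → F)) : Prop :=
  (0 : ZMod r₁ × ZMod r₂ → F) ∈ C ∧ (∀ u ∈ C, ∀ v ∈ C, u + v ∈ C) ∧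
    (∀ (a : F), ∀ v ∈ C, a • v ∈ C) ∧ (∀ v ∈ C, shiftX v ∈ C) ∧ (∀ v ∈ C, shiftY v ∈ C)

/-- The abelian code (ideal) generated by `c₀`. -/
def codeGen2 {F : Type} [Field F] (c₀ : ZMod r₁ × ZMod r₂ → F) :
    Set (ZMod r₁ × ZMod r₂ → F) :=
  ⋂₀ {S | IsAbelianCode2 S ∧ c₀ ∈ S}

/-- `(B,ᾱ)`-apparent distance of a bivariate abelian code. -/
def DeltaCodeAt2 {L : Type} [Field L] [Algebra F L] [NeZero r₁] [NeZero r₂]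
    (B : Set (DSBound F)) (α₁ α₂ : L) (C : Set (ZMod r₁ × ZMod r₂ → F)) : ℕ :=
  sInf {m | ∃ c ∈ C, c ≠ 0 ∧ m = Delta2 B (dft2 α₁ α₂ c)}

/-- `B`-apparent distance of a bivariate abelian code. -/
def DeltaCode2 (L : Type) [Field L] [Algebra F L] [NeZero r₁] [NeZero r₂]
    (B : Set (DSBound F)) (C : Set (ZMod r₁ × ZMod r₂ → F)) : ℕ :=
  sSup {m | ∃ α₁ α₂ : L, IsPrimitiveRoot α₁ r₁ ∧ IsPrimitiveRoot α₂ r₂ ∧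
    m = DeltaCodeAt2 B α₁ α₂ C}

/-- BCH `ᾱ`-apparent distance of a bivariate abelian code. -/
def bchDeltaCodeAt2 {L : Type} [Field L] [Algebra F L] [NeZero r₁] [NeZero r₂]
    (α₁ α₂ : L) (C : Set (ZMod r₁ × ZMod r₂ → F)) : ℕ :=
  sInf {m | ∃ c ∈ C, c ≠ 0 ∧ m = bchDelta (dft2 α₁ α₂ c)}

/-- BCH apparent distance of a bivariate abelian code. -/
def bchDeltaCode2 (L : Type) [Field L] [Algebra F L] [NeZero r₁] [NeZero r₂]
    (C : Set (ZMod r₁ × ZMod r₂ → F)) : ℕ :=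
  sSup {m | ∃ α₁ α₂ : L, IsPrimitiveRoot α₁ r₁ ∧ IsPrimitiveRoot α₂ r₂ ∧
    m = bchDeltaCodeAt2 α₁ α₂ C}

/-! ### q-orbits in two variables -/

def qOrbit2 (q : ℕ) (a : ZMod r₁ × ZMod r₂) : Set (ZMod r₁ × ZMod r₂) :=
  {x | ∃ t : ℕ, x = ((q : ZMod r₁) ^ t * a.1, (q : ZMod r₂) ^ t * a.2)}

def IsUnionOfQOrbits2 (q : ℕ) (D : Set (ZMod r₁ × ZMod r₂)) : Prop :=
  ∀ a ∈ D, qOrbit2 q a ⊆ D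

/-- The matrix afforded by `D`. -/
def afforded2 {L : Type} [Zero L] [One L] (D : Set (ZMod r₁ × ZMod r₂)) :
    ZMod r₁ × ZMod r₂ → L :=
  fun p => if p ∈ D then 0 else 1

/-- Minimum `B`-apparent distance `B-mad(M)` of a matrix. -/
def Bmad2 {L : Type} [Zero L] (B : Set (DSBound F)) (q : ℕ)
    (M : ZMod r₁ × ZMod r₂ → L) : ℕ :=
  sInf {m | ∃ P : ZMod r₁ × ZMod r₂ → L, P ≠ 0 ∧ IsUnionOfQOrbits2 q {p | P p ≠ 0} ∧
    {p | P p ≠ 0} ⊆ {p | M p ≠ 0} ∧ m = Delta2 B P}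

/-- Minimum BCH apparent distance of a matrix. -/
def bchBmad2 {L : Type} [Zero L] (q : ℕ) (M : ZMod r₁ × ZMod r₂ → L) : ℕ :=
  sInf {m | ∃ P : ZMod r₁ × ZMod r₂ → L, P ≠ 0 ∧ IsUnionOfQOrbits2 q {p | P p ≠ 0} ∧
    {p | P p ≠ 0} ⊆ {p | M p ≠ 0} ∧ m = bchDelta P}

/-! ### BCH codes -/

/-- The `q`-cyclotomic coset of `b` modulo `n`. -/
def cycCoset (q : ℕ) {n : ℕ} (b : ZMod n) : Set (ZMod n) :=
  {x | ∃ t : ℕ, x = (q : ZMod n) ^ t * b}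

/-- The defining set `∪_{l=0}^{δ-2} C_q(b+l)` of the BCH code `B_q(α,δ,b)`. -/
def bchDefSet (q : ℕ) {n : ℕ} (δ : ℕ) (b : ZMod n) : Set (ZMod n) :=
  ⋃ l ∈ Finset.range (δ - 1), cycCoset q (b + (l : ZMod n))

/-- `C` is a BCH cyclic code (in the classical sense) with respect to `α`. -/
def IsBCHCyclicCode {F L : Type} [Field F] [Fintype F] [CommRing L] [Algebra F L]
    {n : ℕ} [NeZero n] (α : L) (C : Set (ZMod n → F)) : Prop :=
  ∃ (δ : ℕ) (b : ZMod n), 2 ≤ δ ∧ δ ≤ n ∧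
    DS.defSet1 α C = bchDefSet (Fintype.card F) δ b

/-- The defining set of a bivariate BCH code with parameters `γ, δ₁, δ₂, b₁, b₂`. -/
def bivarBCHDefSet (q : ℕ) (γ : Set (Fin 2)) (δ₁ δ₂ : ℕ) (b₁ : ZMod r₁) (b₂ : ZMod r₂) :
    Set (ZMod r₁ × ZMod r₂) :=
  {p | 0 ∈ γ ∧ ∃ l ∈ Finset.range (δ₁ - 1), ∃ a : ZMod r₁ × ZMod r₂,
      a.1 = b₁ + (l : ZMod r₁) ∧ p ∈ qOrbit2 q a} ∪
  {p | 1 ∈ γ ∧ ∃ l ∈ Finset.range (δ₂ - 1), ∃ a : ZMod r₁ × ZMod r₂,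
      a.2 = b₂ + (l : ZMod r₂) ∧ p ∈ qOrbit2 q a}

/-- `C` is a bivariate BCH code with respect to `(α₁,α₂)`. -/
def IsBivarBCH {F L : Type} [Field F] [Fintype F] [CommRing L] [Algebra F L]
    [NeZero r₁] [NeZero r₂] (α₁ α₂ : L) (C : Set (ZMod r₁ × ZMod r₂ → F)) : Prop :=
  ∃ (γ : Set (Fin 2)) (δ₁ δ₂ : ℕ) (b₁ : ZMod r₁) (b₂ : ZMod r₂),
    (0 ∈ γ → 2 ≤ δ₁ ∧ δ₁ ≤ r₁) ∧ (1 ∈ γ → 2 ≤ δ₂ ∧ δ₂ ≤ r₂) ∧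
    defSet2 α₁ α₂ C = bivarBCHDefSet (Fintype.card F) γ δ₁ δ₂ b₁ b₂

/-- Permutation equivalence of codes (permutation of the coordinate positions). -/
def PermEquiv {F : Type} [Field F] (C C' : Set (ZMod r₁ × ZMod r₂ → F)) : Prop :=
  ∃ σ : Equiv.Perm (ZMod r₁ × ZMod r₂), C' = (fun c => c ∘ σ) '' C

end DS2

end

open DS DS2

/-- A vector some shift of which divides `X^n - 1` is nonzero, because `X^n - 1 ≠ 0`. -/
lemma ne_zero_of_shift_dvd {L : Type} [Field L] {n : ℕ} [NeZero n] {a : ZMod n → L}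
    (ha : ∃ h : ℕ, toPoly (shiftBy h a) ∣ (Polynomial.X ^ n - 1 : Polynomial L)) : a ≠ 0 := by
  rintro rfl
  obtain ⟨h, hd⟩ := ha
  have h0 : toPoly (shiftBy h (0 : ZMod n → L)) = 0 := by
    simp [toPoly, shiftBy]
  rw [h0, zero_dvd_iff] at hd
  exact (Polynomial.monic_X_pow_sub_C (1 : L) (NeZero.ne n)).ne_zero (by simpa using hd)

lemma nonzeros2_prodPoly {L : Type} [Field L] {r₁ r₂ : ℕ} [NeZero r₁] [NeZero r₂]
    (a : ZMod r₁ → L) (b : ZMod r₂ → L) :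
    nonzeros2 (prodPoly a b) = nonzeros1 a ×ˢ nonzeros1 b := by
  have heval : ∀ u v : L, eval2 (prodPoly a b) u v = evalV a u * evalV b v := by
    intro u v
    simp only [eval2, prodPoly, evalV, Finset.sum_mul_sum, Fintype.sum_prod_type]
    refine Finset.sum_congr rfl fun i _ => Finset.sum_congr rfl fun j _ => by ring
  ext ⟨u, v⟩
  simp only [nonzeros2, nonzeros1, heval, Set.mem_prod, Set.mem_ofPred_eq, mul_ne_zero_iff]
  tauto

/-- The BCH apparent distance of a vector is invariant under nonzero scalar factors. -/
lemma bchV_const_mul {L : Type} [Field L] {n : ℕ} {c : L} (hc : c ≠ 0) (v : ZMod n → L) :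
    bchV (fun i => c * v i) = bchV v := by
  have h0 : (fun i => c * v i) = 0 ↔ v = 0 := by simp [funext_iff, hc]
  simp [bchV, h0, hc]

section prodPoly

variable {L : Type} [Field L] {r₁ r₂ : ℕ} {a : ZMod r₁ → L} {b : ZMod r₂ → L}

lemma supp1_prodPoly (hb : b ≠ 0) : supp1 (prodPoly a b) = {i | a i ≠ 0} := by
  obtain ⟨j, hj⟩ := Function.ne_iff.mp hb
  ext i
  simp only [supp1, row, prodPoly, Set.mem_ofPred_eq, Function.ne_iff, Pi.zero_apply,
    mul_ne_zero_iff]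
  exact ⟨fun ⟨_, h⟩ => h.1, fun h => ⟨j, h, hj⟩⟩

lemma supp2_prodPoly (ha : a ≠ 0) : supp2 (prodPoly a b) = {j | b j ≠ 0} := by
  obtain ⟨i, hi⟩ := Function.ne_iff.mp ha
  ext j
  simp only [supp2, col, prodPoly, Set.mem_ofPred_eq, Function.ne_iff, Pi.zero_apply,
    mul_ne_zero_iff]
  exact ⟨fun ⟨_, h⟩ => h.2, fun h => ⟨i, hi, h⟩⟩

lemma bchOmega1_prodPoly (ha : a ≠ 0) (hb : b ≠ 0) : bchOmega1 (prodPoly a b) = bchV a := by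
  rw [bchOmega1, supp1_prodPoly hb, bchV, if_neg ha]

lemma bchOmega2_prodPoly (ha : a ≠ 0) (hb : b ≠ 0) : bchOmega2 (prodPoly a b) = bchV b := by
  rw [bchOmega2, supp2_prodPoly ha, bchV, if_neg hb]

lemma bchEps1_prodPoly (ha : a ≠ 0) (hb : b ≠ 0) : bchEps1 (prodPoly a b) = bchV b := by
  have hne : {i | a i ≠ 0}.Nonempty := Function.ne_iff.mp ha
  have himg : (fun k => bchV (row (prodPoly a b) k)) '' {i | a i ≠ 0} = {bchV b} := by
    rw [← hne.image_const (bchV b)]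
    exact Set.image_congr fun k hk => bchV_const_mul hk b
  rw [bchEps1, supp1_prodPoly hb, himg, csSup_singleton]

lemma bchEps2_prodPoly (ha : a ≠ 0) (hb : b ≠ 0) : bchEps2 (prodPoly a b) = bchV a := by
  have hne : {j | b j ≠ 0}.Nonempty := Function.ne_iff.mp hb
  have himg : (fun k => bchV (col (prodPoly a b) k)) '' {j | b j ≠ 0} = {bchV a} := by
    rw [← hne.image_const (bchV a)]
    refine Set.image_congr fun k hk => ?_
    have hcol : col (prodPoly a b) k = fun i => b k * a i := by
      funext i
      exact mul_comm _ _
    rw [hcol]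
    exact bchV_const_mul hk a
  rw [bchEps2, supp2_prodPoly ha, himg, csSup_singleton]

lemma prodPoly_ne_zero (ha : a ≠ 0) (hb : b ≠ 0) : prodPoly a b ≠ 0 := by
  obtain ⟨i, hi⟩ := Function.ne_iff.mp ha
  obtain ⟨j, hj⟩ := Function.ne_iff.mp hb
  exact Function.ne_iff.mpr ⟨(i, j), mul_ne_zero hi hj⟩

end prodPoly

/-- Properties of products `g = a(X₁)·b(X₂)` where `a` and `b`
satisfy the one-variable condition `Δ(M(·)) = |Z̄(·)|` and shifted copies divide
`X^r - 1`. -/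
theorem stmt_14 {L : Type} [Field L] (r₁ r₂ : ℕ) [NeZero r₁] [NeZero r₂]
    (hr₁ : (r₁ : L) ≠ 0) (hr₂ : (r₂ : L) ≠ 0)
    (hroot₁ : ∃ α : L, IsPrimitiveRoot α r₁) (hroot₂ : ∃ α : L, IsPrimitiveRoot α r₂)
    (a : ZMod r₁ → L) (b : ZMod r₂ → L)
    (ha : ∃ h₁ : ℕ, toPoly (shiftBy h₁ a) ∣ (Polynomial.X ^ r₁ - 1 : Polynomial L))
    (haΔ : bchV a = (nonzeros1 a).ncard)
    (hb : ∃ h₂ : ℕ, toPoly (shiftBy h₂ b) ∣ (Polynomial.X ^ r₂ - 1 : Polynomial L))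
    (hbΔ : bchV b = (nonzeros1 b).ncard) :
    nonzeros2 (prodPoly a b) =
      (Prod.fst '' nonzeros2 (prodPoly a b)) ×ˢ (Prod.snd '' nonzeros2 (prodPoly a b)) ∧
    (bchDelta (prodPoly a b) = bchV a * bchV b ∧
      bchV a * bchV b = (nonzeros2 (prodPoly a b)).ncard) ∧
    (bchD1 (prodPoly a b) = bchD2 (prodPoly a b) ∧
      bchD2 (prodPoly a b) = bchDelta (prodPoly a b) ∧
      bchDelta (prodPoly a b) = (nonzeros2 (prodPoly a b)).ncard) ∧
    (bchV a = bchEps2 (prodPoly a b) ∧ bchEps2 (prodPoly a b) = bchOmega1 (prodPoly a b)) ∧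
    (bchV b = bchEps1 (prodPoly a b) ∧ bchEps1 (prodPoly a b) = bchOmega2 (prodPoly a b)) := by
  have ha0 := ne_zero_of_shift_dvd ha
  have hb0 := ne_zero_of_shift_dvd hb
  have hD1 : bchD1 (prodPoly a b) = bchV a * bchV b := by
    rw [bchD1, bchOmega1_prodPoly ha0 hb0, bchEps1_prodPoly ha0 hb0]
  have hD2 : bchD2 (prodPoly a b) = bchV a * bchV b := by
    rw [bchD2, bchOmega2_prodPoly ha0 hb0, bchEps2_prodPoly ha0 hb0, mul_comm]
  have hD : bchDelta (prodPoly a b) = bchV a * bchV b := by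
    rw [bchDelta, if_neg (prodPoly_ne_zero ha0 hb0), hD1, hD2, max_self]
  have hcard : bchV a * bchV b = (nonzeros2 (prodPoly a b)).ncard := by
    rw [nonzeros2_prodPoly, Set.ncard_prod, haΔ, hbΔ]
  refine ⟨?_, ⟨hD, hcard⟩, ⟨hD1.trans hD2.symm, hD2.trans hD.symm, hD.trans hcard⟩,
    ⟨(bchEps2_prodPoly ha0 hb0).symm, ?_⟩, ⟨(bchEps1_prodPoly ha0 hb0).symm, ?_⟩⟩
  -- A product set is the product of its projections, also when one factor is empty.
  · rw [nonzeros2_prodPoly]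
    ext ⟨u, v⟩
    constructor
    · exact fun h => ⟨⟨_, h, rfl⟩, ⟨_, h, rfl⟩⟩
    · rintro ⟨⟨⟨u', v'⟩, h, rfl⟩, ⟨⟨u'', v''⟩, h', rfl⟩⟩
      exact ⟨h.1, h'.2⟩
  · rw [bchEps2_prodPoly ha0 hb0, bchOmega1_prodPoly ha0 hb0]
  · rw [bchEps1_prodPoly ha0 hb0, bchOmega2_prodPoly ha0 hb0]
end

section
/- Let 𝕂 be an intermediate field 𝔽_q ⊆ 𝕂 ⊆ 𝕃, and let a = a(X_1) ∈ 𝕂(r_1) and b = b(X_2) ∈ 𝕂(r_2) be such that a ∣ X_1^{r_1}−1 and b ∣ X_2^{r_2}−1. Suppose there exist (α_1,α_2) ∈ U, h_1 ∈ ℤ_{r_1} and h_2 ∈ ℤ_{r_2} such that φ^{-1}_{α_1, X_1^{h_1}a mod X_1^{r_1}−1} ∈ 𝔽_q(r_1) and φ^{-1}_{α_2, X_2^{h_2}b mod X_2^{r_2}−1} ∈ 𝔽_q(r_2) (i.e., both inverse DFTs have all coefficients in 𝔽_q). Then the abelian code C generated by φ^{-1}_{α_1, X_1^{h_1}a}·φ^{-1}_{α_2,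 X_2^{h_2}b} in 𝔽_q(r_1,r_2) satisfies Δ(M(ab)) = Δ(C) = d(C). Moreover, for any primitive roots β_1 ∈ U_{r_1}, β_2 ∈ U_{r_2}, the code C_{(β_1,β_2)} generated by φ^{-1}_{β_1, X_1^{h_1}a}·φ^{-1}_{β_2, X_2^{h_2}b} is an ideal of 𝔽_q(r_1,r_2) and satisfies Δ(M(ab)) = Δ(C_{(β_1,β_2)}) = d(C_{(β_1,β_2)}) = d(C). Here Δ denotes the apparent distance with respect to the BCH ds-bound. -/
/-!
Write `d₁ = deg a`, `d₂ = deg b`. All the quantities in the theorem equal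
`(r₁ - d₁) * (r₂ - d₂)`.

The transform of the generator is the matrix of `X₁ ^ h₁ * a * X₂ ^ h₂ * b`, and codewords have
transforms supported inside its support (`DSAux.dft2_eq_zero_of_mem`). The coefficients of `a`
and `b` vanish above their degrees, so every nonzero codeword has a transform with apparent
distance at least `(r₁ - d₁) * (r₂ - d₂)` (`DSAux.le_bchDelta_of_mem`). In turn the apparent
distance of the transform of any word, for any pair of primitive roots, is at most its weight
(`DSAux.bchDelta_le`), by applying the BCH bound `DSAux.bch_bound` first to a row and then to the
columns. Finally, as `a` divides `X₁ ^ r₁ - 1`, it has `d₁` distinct roots among the `r₁`-th roots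
of unity, and likewise for `b`, so the generator itself has weight at most
`(r₁ - d₁) * (r₂ - d₂)` (`DSAux.wt_gen_le`), and all the inequalities are equalities.

A change of primitive roots permutes the coefficients of the inverse transforms
(`DSAux.invDFT1_mem_of_mem`), so these stay in `F` and the same computation applies.
-/

open scoped Classical
open Polynomial

open DS DS2

namespace DSAux

/-! ### Additive characters and the univariate BCH bound -/

section Univariate

variable {L : Type} [Field L] {n : ℕ} [NeZero n]

/-- The character `x ↦ α ^ x` of `ℤ/n` attached to a primitive `n`-th root of unity. Writing the
Fourier kernels through it replaces arithmetic with representatives `ZMod.val` by additivity. -/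
noncomputable def ch {α : L} (hα : IsPrimitiveRoot α n) : AddChar (ZMod n) L :=
  AddChar.zmodChar n hα.pow_eq_one

lemma ch_apply {α : L} (hα : IsPrimitiveRoot α n) (x : ZMod n) : ch hα x = α ^ x.val :=
  AddChar.zmodChar_apply _ x

lemma pow_eq_ch {α : L} (hα : IsPrimitiveRoot α n) (m : ℕ) : α ^ m = ch hα (m : ZMod n) :=
  (AddChar.zmodChar_apply' hα.pow_eq_one m).symm

lemma pow_pow_eq_ch {α : L} (hα : IsPrimitiveRoot α n) (x y : ZMod n) :
    (α ^ x.val) ^ y.val = ch hα (x * y) := by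
  rw [← pow_mul, pow_eq_ch hα]
  simp

lemma inv_pow_pow_eq_ch {α : L} (hα : IsPrimitiveRoot α n) (x y : ZMod n) :
    (α⁻¹ ^ x.val) ^ y.val = ch hα (-(x * y)) := by
  rw [inv_pow, inv_pow, pow_pow_eq_ch hα, AddChar.map_neg_eq_inv]

lemma ch_inj {α : L} (hα : IsPrimitiveRoot α n) : Function.Injective (ch hα) := by
  intro x y h
  rw [ch_apply, ch_apply] at h
  exact ZMod.val_injective n (hα.pow_inj (ZMod.val_lt x) (ZMod.val_lt y) h)

lemma ch_ne_zero {α : L} (hα : IsPrimitiveRoot α n) (x : ZMod n) : ch hα x ≠ 0 := by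
  rw [ch_apply]
  exact pow_ne_zero _ (hα.ne_zero (NeZero.ne n))

lemma cast_ne_zero {α : L} (hα : IsPrimitiveRoot α n) : (n : L) ≠ 0 :=
  (hα.neZero').ne

lemma sum_ch {α : L} (hα : IsPrimitiveRoot α n) (b : ZMod n) :
    ∑ x : ZMod n, ch hα (x * b) = if b = 0 then (n : L) else 0 := by
  have := AddChar.sum_mulShift b (AddChar.zmodChar_primitive_of_primitive_root n hα)
  simpa [ch, ZMod.card] using this

/-- The univariate discrete Fourier transform over `L`, with kernel `ch`. -/
noncomputable def ft {α : L} (hα : IsPrimitiveRoot α n) (v : ZMod n → L) : ZMod n → L :=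
  fun k => ∑ x : ZMod n, v x * ch hα (k * x)

lemma ft_inv {α : L} (hα : IsPrimitiveRoot α n) (v : ZMod n → L) (x : ZMod n) :
    ∑ k : ZMod n, ft hα v k * ch hα (-(k * x)) = n * v x := by
  simp only [ft, Finset.sum_mul]
  rw [Finset.sum_comm]
  have : ∀ y : ZMod n, ∑ k : ZMod n, v y * ch hα (k * y) * ch hα (-(k * x))
      = v y * if y - x = 0 then (n : L) else 0 := by
    intro y
    rw [← sum_ch hα, Finset.mul_sum]
    refine Finset.sum_congr rfl fun k _ => ?_
    rw [mul_assoc, ← AddChar.map_add_eq_mul]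
    congr 2; ring
  simp only [this, sub_eq_zero, mul_ite, mul_zero, Finset.sum_ite_eq', Finset.mem_univ, if_true]
  ring

lemma eq_zero_of_ft {α : L} (hα : IsPrimitiveRoot α n) (v : ZMod n → L) (h : ft hα v = 0) :
    v = 0 := by
  funext x
  have := ft_inv hα v x
  simp only [h, Pi.zero_apply, zero_mul, Finset.sum_const_zero] at this
  exact (mul_eq_zero.1 this.symm).resolve_left (cast_ne_zero hα)

lemma invDFT1_eq {α : L} (hα : IsPrimitiveRoot α n) (g : ZMod n → L) (j : ZMod n) :
    invDFT1 α g j = (n : L)⁻¹ * ∑ i : ZMod n, g i * ch hα (-(j * i)) := by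
  simp only [invDFT1, evalV, inv_pow_pow_eq_ch hα]

lemma ft_invDFT1 {α : L} (hα : IsPrimitiveRoot α n) (g : ZMod n → L) :
    ft hα (invDFT1 α g) = g := by
  funext k
  simp only [ft, invDFT1_eq hα, mul_assoc, ← Finset.mul_sum, Finset.sum_mul]
  rw [Finset.sum_comm]
  have : ∀ i : ZMod n, ∑ x : ZMod n, g i * (ch hα (-(x * i)) * ch hα (k * x))
      = g i * if k - i = 0 then (n : L) else 0 := by
    intro i
    rw [← sum_ch hα, Finset.mul_sum]
    refine Finset.sum_congr rfl fun x _ => ?_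
    rw [← AddChar.map_add_eq_mul]
    congr 2; ring
  simp only [this, sub_eq_zero, mul_ite, mul_zero, Finset.sum_ite_eq, Finset.mem_univ, if_true]
  field_simp [cast_ne_zero hα]

/-- The BCH bound. If `a - 1` consecutive Fourier coefficients of `v` vanish, then `v` is
orthogonal, up to the twist by `i₀`, to all polynomials of degree `< a - 1` evaluated at the
`n`-th roots of unity; a support of size `< a` would allow a polynomial of that degree vanishing
on the support except at one point. -/
lemma bch_bound {α : L} (hα : IsPrimitiveRoot α n) (v : ZMod n → L) (hv : v ≠ 0)
    (N : Set (ZMod n)) (hN : ∀ k ∈ N, ft hα v k = 0) : bchOpt n N ≤ wt v := by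
  obtain ⟨x₀, hx₀⟩ := Function.ne_iff.1 hv
  have hmem : x₀ ∈ Finset.univ.filter fun i => v i ≠ 0 := by simpa using hx₀
  refine csSup_le ⟨1, Or.inl rfl⟩ ?_
  rintro a (rfl | ⟨ha, i₀, hi⟩)
  · exact Finset.card_pos.2 ⟨x₀, hmem⟩
  by_contra! hlt
  set S := Finset.univ.filter fun i => v i ≠ 0 with hS
  change S.card < a at hlt
  set p : Polynomial L := ∏ x ∈ S.erase x₀, (X - C (ch hα x)) with hp
  have hdeg : p.natDegree < a - 1 := by
    rw [hp, natDegree_prod_of_monic _ _ fun x _ => monic_X_sub_C _]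
    simp only [natDegree_X_sub_C, Finset.sum_const, smul_eq_mul, mul_one,
      Finset.card_erase_of_mem hmem]
    have := Finset.card_pos.2 ⟨x₀, hmem⟩
    omega
  have h0 : ∑ x : ZMod n, v x * ch hα (i₀ * x) * p.eval (ch hα x) = 0 := by
    have : ∀ x : ZMod n, v x * ch hα (i₀ * x) * p.eval (ch hα x)
        = ∑ t ∈ Finset.range (a - 1), p.coeff t * (v x * ch hα ((i₀ + t) * x)) := by
      intro x
      rw [eval_eq_sum_range' hdeg, Finset.mul_sum]
      refine Finset.sum_congr rfl fun t _ => ?_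
      rw [add_mul, AddChar.map_add_eq_mul, ← nsmul_eq_mul, AddChar.map_nsmul_eq_pow]
      ring
    simp only [this]
    rw [Finset.sum_comm]
    refine Finset.sum_eq_zero fun t ht => ?_
    rw [← Finset.mul_sum]
    have := hN _ (hi t (Finset.mem_range.1 ht))
    rw [ft] at this
    rw [this, mul_zero]
  rw [Finset.sum_eq_single x₀] at h0
  · have hpe : p.eval (ch hα x₀) ≠ 0 := by
      rw [hp, eval_prod]
      refine Finset.prod_ne_zero_iff.2 fun x hx => ?_
      simp only [eval_sub, eval_X, eval_C]
      exact sub_ne_zero.2 fun h => (Finset.mem_erase.1 hx).1 (ch_inj hα h).symm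
    exact mul_ne_zero (mul_ne_zero hx₀ (ch_ne_zero hα _)) hpe h0
  · intro x _ hx
    by_cases hvx : v x = 0
    · simp [hvx]
    · have : p.eval (ch hα x) = 0 := by
        rw [hp, eval_prod]
        exact Finset.prod_eq_zero (i := x) (by simp [hS, hx, hvx]) (by simp)
      simp [this]
  · simp

lemma le_bchOpt {N : Set (ZMod n)} (hN : N ≠ Set.univ) {N' : Set (ZMod n)} (h : N' ⊆ N)
    {m : ℕ} (hm : bchRel N' m) : m ≤ bchOpt n N := by
  refine le_csSup ⟨n, ?_⟩ ?_
  · rintro a (rfl | ⟨ha, i₀, hi⟩)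
    · exact Nat.one_le_iff_ne_zero.2 (NeZero.ne n)
    · by_contra! hlt
      refine hN (Set.eq_univ_of_forall fun x => ?_)
      have := hi (x - i₀).val (lt_of_lt_of_le (ZMod.val_lt _) (by omega))
      simpa using this
  · rcases hm with h1 | ⟨h2, i₀, hi⟩
    · exact Or.inl h1
    · exact Or.inr ⟨h2, i₀, fun t ht => h (hi t ht)⟩

/-! ### Divisors of `X ^ n - 1` -/

lemma coeff_toPoly (a : ZMod n → L) (i : ZMod n) : (toPoly a).coeff i.val = a i := by
  simp only [toPoly, finsetSum_coeff, coeff_C_mul, coeff_X_pow]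
  rw [Finset.sum_eq_single i]
  · simp
  · intro j _ hj
    rw [if_neg fun h => hj (ZMod.val_injective n h).symm, mul_zero]
  · simp

lemma natDegree_toPoly_lt (a : ZMod n → L) : (toPoly a).natDegree < n := by
  refine lt_of_le_of_lt (natDegree_sum_le_of_forall_le (n := n - 1) _ _ fun i _ => ?_)
    (Nat.sub_lt (Nat.pos_of_ne_zero (NeZero.ne n)) one_pos)
  exact (natDegree_C_mul_X_pow_le _ _).trans (Nat.le_sub_one_of_lt (ZMod.val_lt i))

lemma eval_toPoly (a : ZMod n → L) (x : L) : (toPoly a).eval x = evalV a x := by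
  simp [toPoly, evalV, eval_finsetSum]

/-- The coefficients of `X ^ h * a` vanish on the cyclic interval following the top degree. -/
lemma bchRel_shift (a : ZMod n → L) (h : ZMod n) :
    bchRel {i | shiftBy h.val a i ≠ 0}ᶜ (n - (toPoly a).natDegree) := by
  have hlt := natDegree_toPoly_lt a
  set d := (toPoly a).natDegree with hd
  by_cases h1 : n - d = 1
  · exact Or.inl h1
  refine Or.inr ⟨by omega, h + ((d + 1 : ℕ) : ZMod n), fun t ht => ?_⟩
  simp only [Set.mem_compl_iff, Set.mem_ofPred_eq, not_not, shiftBy, ZMod.natCast_zmod_val]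
  have e : h + ((d + 1 : ℕ) : ZMod n) + (t : ZMod n) - h = ((d + 1 + t : ℕ) : ZMod n) := by
    push_cast; ring
  rw [e, ← coeff_toPoly a]
  apply coeff_eq_zero_of_natDegree_lt
  rw [ZMod.val_natCast, Nat.mod_eq_of_lt (by omega)]
  omega

/-- A divisor of `X ^ n - 1` of degree `d` has `d` distinct roots among the powers of `α⁻¹`, so
its inverse transform has weight at most `n - d`; multiplication by `X ^ h` only rescales the
values. -/
lemma wt_invDFT1_le {α : L} (hα : IsPrimitiveRoot α n) (a : ZMod n → L)
    (ha : toPoly a ∣ (X ^ n - 1 : Polynomial L)) (h : ZMod n) :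
    wt (invDFT1 α (shiftBy h.val a)) ≤ n - (toPoly a).natDegree := by
  have hshift : ∀ j, evalV a (α⁻¹ ^ j.val) = 0 → invDFT1 α (shiftBy h.val a) j = 0 := by
    intro j hj
    rw [invDFT1_eq hα]
    have : ∑ i : ZMod n, shiftBy h.val a i * ch hα (-(j * i))
        = ch hα (-(j * h)) * evalV a (α⁻¹ ^ j.val) := by
      simp only [evalV, inv_pow_pow_eq_ch hα, shiftBy, ZMod.natCast_zmod_val]
      rw [← Equiv.sum_comp (Equiv.addRight h), Finset.mul_sum]
      refine Finset.sum_congr rfl fun i _ => ?_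
      simp only [Equiv.coe_addRight, add_sub_cancel_right]
      rw [mul_left_comm, ← AddChar.map_add_eq_mul]
      congr 2; ring
    rw [this, hj, mul_zero, mul_zero]
  have hne : (X ^ n - 1 : Polynomial L) ≠ 0 :=
    X_pow_sub_C_ne_zero (Nat.pos_of_ne_zero (NeZero.ne n)) 1
  have hsplit : (toPoly a).Splits := (X_pow_sub_one_splits hα).of_dvd hne ha
  have hnd : (toPoly a).roots.Nodup :=
    Multiset.nodup_of_le (roots.le_of_dvd hne ha) hα.nthRoots_one_nodup
  set Z := Finset.univ.filter fun j : ZMod n => evalV a (α⁻¹ ^ j.val) = 0 with hZ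
  have hcard : (toPoly a).natDegree ≤ Z.card := by
    rw [hsplit.natDegree_eq_card_roots, ← Multiset.toFinset_card_of_nodup hnd]
    refine (Finset.card_le_card ?_).trans
      (Finset.card_image_le (s := Z) (f := fun j => α⁻¹ ^ j.val))
    intro x hx
    have hroot := isRoot_of_mem_roots (Multiset.mem_toFinset.1 hx)
    have hx1 : x ^ n = 1 := by
      have := eval_eq_zero_of_dvd_of_eval_eq_zero ha hroot
      simpa [sub_eq_zero] using this
    obtain ⟨i, hi, rfl⟩ := hα.inv.eq_pow_of_pow_eq_one hx1
    refine Finset.mem_image.2 ⟨(i : ZMod n), ?_, ?_⟩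
    · simp only [hZ, Finset.mem_filter, Finset.mem_univ, true_and, ZMod.val_natCast,
        Nat.mod_eq_of_lt hi]
      rw [← eval_toPoly]; exact hroot
    · simp only [ZMod.val_natCast, Nat.mod_eq_of_lt hi]
  have hsub : (Finset.univ.filter fun j => invDFT1 α (shiftBy h.val a) j ≠ 0) ⊆ Zᶜ := by
    intro j hj
    simp only [Finset.mem_filter, Finset.mem_univ, true_and, Finset.mem_compl, hZ] at hj ⊢
    exact fun h0 => hj (hshift j h0)
  have := Finset.card_le_card hsub
  rw [Finset.card_compl, ZMod.card] at this
  exact this.trans (by omega)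

lemma shift_ne_zero (a : ZMod n → L) (ha : toPoly a ∣ (X ^ n - 1 : Polynomial L)) (h : ZMod n) :
    shiftBy h.val a ≠ 0 := by
  intro h0
  have h00 : a = 0 := by
    funext i
    have := congrFun h0 (i + h)
    simpa [shiftBy] using this
  have : toPoly a = 0 := by simp [toPoly, h00]
  rw [this, zero_dvd_iff] at ha
  exact X_pow_sub_C_ne_zero (Nat.pos_of_ne_zero (NeZero.ne n)) (1 : L) (by simpa using ha)

/-- Changing the primitive root permutes the coefficients of the inverse transform. -/
lemma invDFT1_mem_of_mem {α β : L} (hα : IsPrimitiveRoot α n) (hβ : IsPrimitiveRoot β n)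
    (g : ZMod n → L) (T : Set L) (h : ∀ i, invDFT1 α g i ∈ T) (i : ZMod n) :
    invDFT1 β g i ∈ T := by
  obtain ⟨k, -, rfl⟩ := hα.eq_pow_of_pow_eq_one hβ.pow_eq_one
  convert h ((k : ZMod n) * i) using 1
  simp only [invDFT1]
  congr 2
  have e : α ^ (((k : ZMod n) * i).val) = (α ^ k) ^ i.val := by
    rw [← ch_apply hα, ← pow_mul, pow_eq_ch hα]
    simp
  rw [inv_pow, inv_pow, e]

end Univariate

/-! ### The two-variable bound -/

section Bivariate

variable {L : Type} [Field L] {r₁ r₂ : ℕ} [NeZero r₁] [NeZero r₂]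

/-- The bivariate discrete Fourier transform over `L`, with kernel `ch`. -/
noncomputable def ft2 {α₁ α₂ : L} (hα₁ : IsPrimitiveRoot α₁ r₁) (hα₂ : IsPrimitiveRoot α₂ r₂)
    (f : ZMod r₁ × ZMod r₂ → L) : ZMod r₁ × ZMod r₂ → L :=
  fun j => ∑ p : ZMod r₁ × ZMod r₂, f p * ch hα₁ (j.1 * p.1) * ch hα₂ (j.2 * p.2)

lemma dft2_eq {F : Type} [Field F] [Algebra F L] {α₁ α₂ : L} (hα₁ : IsPrimitiveRoot α₁ r₁)
    (hα₂ : IsPrimitiveRoot α₂ r₂) (c : ZMod r₁ × ZMod r₂ → F) :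
    dft2 α₁ α₂ c = ft2 hα₁ hα₂ fun p => algebraMap F L (c p) := by
  funext j
  simp only [dft2, ft2, pow_pow_eq_ch hα₁, pow_pow_eq_ch hα₂]

lemma row_ft2 {α₁ α₂ : L} (hα₁ : IsPrimitiveRoot α₁ r₁) (hα₂ : IsPrimitiveRoot α₂ r₂)
    (f : ZMod r₁ × ZMod r₂ → L) (i : ZMod r₁) :
    row (ft2 hα₁ hα₂ f) i = ft hα₂ fun y => ft hα₁ (fun x => f (x, y)) i := by
  funext j
  simp only [row, ft2, ft, Fintype.sum_prod_type, Finset.sum_mul]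
  exact Finset.sum_comm

lemma eq_zero_of_ft2 {α₁ α₂ : L} (hα₁ : IsPrimitiveRoot α₁ r₁) (hα₂ : IsPrimitiveRoot α₂ r₂)
    (f : ZMod r₁ × ZMod r₂ → L) (h : ft2 hα₁ hα₂ f = 0) : f = 0 := by
  have h1 : ∀ y, (fun x => f (x, y)) = 0 := by
    intro y
    refine eq_zero_of_ft hα₁ _ (funext fun i => ?_)
    have := eq_zero_of_ft hα₂ (fun y => ft hα₁ (fun x => f (x, y)) i) (by
      rw [← row_ft2 hα₁ hα₂ f i, h]; rfl)
    exact congrFun this y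
  funext p
  exact congrFun (h1 p.2) p.1

lemma wt_eq_sum (f : ZMod r₁ × ZMod r₂ → L) : wt f = ∑ y, wt fun x => f (x, y) := by
  simp only [wt, Finset.card_filter, Fintype.sum_prod_type]
  exact Finset.sum_comm

/-- Choose a row `k` of the transform `M` attaining `ε₁`. Viewed as a transform in `X₂`, it forces
at least `ε₁` values `y` for which the column `f(·, y)` is nonzero, and the transform of each such
column is supported in `supp₁ M`, so that each has weight at least `ω₁`. -/
lemma bchD1_le {α₁ α₂ : L} (hα₁ : IsPrimitiveRoot α₁ r₁) (hα₂ : IsPrimitiveRoot α₂ r₂)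
    (f : ZMod r₁ × ZMod r₂ → L) : bchD1 (ft2 hα₁ hα₂ f) ≤ wt f := by
  set M := ft2 hα₁ hα₂ f with hM
  by_cases hne : (supp1 M).Nonempty
  swap
  · simp [bchD1, bchEps1, Set.not_nonempty_iff_eq_empty.1 hne]
  obtain ⟨k, hk, hkε⟩ : bchEps1 M ∈ (fun k => bchV (row M k)) '' supp1 M :=
    Nat.sSup_mem (hne.image _) (Set.toFinite _).bddAbove
  have hk' : row M k ≠ 0 := hk
  set g : ZMod r₁ → ZMod r₂ → L := fun i y => ft hα₁ (fun x => f (x, y)) i with hg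
  have hrow : ∀ i, row M i = ft hα₂ (g i) := fun i => row_ft2 hα₁ hα₂ f i
  have hgk : g k ≠ 0 := by
    intro h0
    apply hk'
    rw [hrow, h0]
    funext j
    simp [ft]
  have h1 : bchEps1 M ≤ wt (g k) := by
    rw [← hkε]
    simp only [bchV, if_neg hk']
    refine bch_bound hα₂ (g k) hgk _ fun j hj => ?_
    rw [← hrow]
    simpa using hj
  have h2 : ∀ y, g k y ≠ 0 → bchOmega1 M ≤ wt fun x => f (x, y) := by
    intro y hy
    refine bch_bound hα₁ _ ?_ _ fun i hi => ?_
    · intro h0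
      apply hy
      have hx : ∀ x, f (x, y) = 0 := congrFun h0
      simp [hg, hx, ft]
    · have : row M i = 0 := by simpa [supp1] using hi
      exact congrFun (eq_zero_of_ft hα₂ (g i) (by rw [← hrow, this])) y
  calc bchD1 M ≤ bchOmega1 M * wt (g k) := Nat.mul_le_mul_left _ h1
    _ = ∑ y ∈ Finset.univ.filter (fun y => g k y ≠ 0), bchOmega1 M := by
        simp [wt, mul_comm]
    _ ≤ ∑ y ∈ Finset.univ.filter (fun y => g k y ≠ 0), wt fun x => f (x, y) :=
        Finset.sum_le_sum fun y hy => h2 y (Finset.mem_filter.1 hy).2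
    _ ≤ ∑ y, wt fun x => f (x, y) :=
        Finset.sum_le_sum_of_subset (Finset.filter_subset _ _)
    _ = wt f := (wt_eq_sum f).symm

lemma bchD2_le {α₁ α₂ : L} (hα₁ : IsPrimitiveRoot α₁ r₁) (hα₂ : IsPrimitiveRoot α₂ r₂)
    (f : ZMod r₁ × ZMod r₂ → L) : bchD2 (ft2 hα₁ hα₂ f) ≤ wt f := by
  have h := bchD1_le hα₂ hα₁ (f ∘ Prod.swap)
  have e1 : ft2 hα₂ hα₁ (f ∘ Prod.swap) = ft2 hα₁ hα₂ f ∘ Prod.swap := by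
    funext j
    simp only [ft2, Function.comp]
    rw [← Equiv.sum_comp (Equiv.prodComm _ _)]
    refine Finset.sum_congr rfl fun p _ => ?_
    simp only [Equiv.prodComm_apply, Prod.swap_swap, Prod.fst_swap, Prod.snd_swap]
    ring
  have e2 : wt (f ∘ Prod.swap) = wt f := by
    simp only [wt, Finset.card_filter]
    exact Equiv.sum_comp (Equiv.prodComm (ZMod r₂) (ZMod r₁)) fun p => if f p ≠ 0 then 1 else 0
  rw [e1, e2] at h
  exact h

lemma bchDelta_le {α₁ α₂ : L} (hα₁ : IsPrimitiveRoot α₁ r₁) (hα₂ : IsPrimitiveRoot α₂ r₂)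
    (f : ZMod r₁ × ZMod r₂ → L) : bchDelta (ft2 hα₁ hα₂ f) ≤ wt f := by
  unfold bchDelta
  split_ifs
  · exact Nat.zero_le _
  · exact max_le (bchD1_le hα₁ hα₂ f) (bchD2_le hα₁ hα₂ f)

/-- A nonzero matrix whose support avoids `N₁` in the first and `N₂` in the second coordinate
inherits the consecutive runs of `N₁` and `N₂`. -/
lemma mul_le_bchDelta {M : ZMod r₁ × ZMod r₂ → L} (hM : M ≠ 0) {N₁ : Set (ZMod r₁)}
    {N₂ : Set (ZMod r₂)} (h₁ : ∀ p, M p ≠ 0 → p.1 ∉ N₁) (h₂ : ∀ p, M p ≠ 0 → p.2 ∉ N₂)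
    {m₁ m₂ : ℕ} (hm₁ : bchRel N₁ m₁) (hm₂ : bchRel N₂ m₂) : m₁ * m₂ ≤ bchDelta M := by
  obtain ⟨p, hp⟩ := Function.ne_iff.1 hM
  have hp' : M p ≠ 0 := hp
  have hrow : row M p.1 ≠ 0 := fun h0 => hp' (congrFun h0 p.2)
  rw [bchDelta, if_neg hM]
  refine le_trans (Nat.mul_le_mul ?_ ?_) (le_max_left _ _)
  · refine le_bchOpt ?_ ?_ hm₁
    · intro h0
      exact (h0 ▸ Set.mem_univ p.1 : p.1 ∈ (supp1 M)ᶜ) hrow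
    · intro i hi hsupp
      obtain ⟨j, hj⟩ := Function.ne_iff.1 (hsupp : row M i ≠ 0)
      exact h₁ (i, j) hj hi
  · refine le_trans ?_ (le_csSup (Set.toFinite _).bddAbove
      (Set.mem_image_of_mem (fun k => bchV (row M k)) (show p.1 ∈ supp1 M from hrow)))
    simp only [bchV, if_neg hrow]
    refine le_bchOpt ?_ ?_ hm₂
    · intro h0
      exact (h0 ▸ Set.mem_univ p.2 : p.2 ∈ {j | row M p.1 j ≠ 0}ᶜ) hp'
    · intro j hj hsupp
      exact h₂ (p.1, j) hsupp hj

end Bivariate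

/-! ### Generated codes -/

section Codes

variable {F : Type} [Field F] {L : Type} [Field L] [Algebra F L] {r₁ r₂ : ℕ}

lemma isAbelianCode2_codeGen2 (c₀ : ZMod r₁ × ZMod r₂ → F) : IsAbelianCode2 (codeGen2 c₀) := by
  refine ⟨fun S hS => hS.1.1, fun u hu v hv S hS => hS.1.2.1 u (hu S hS) v (hv S hS),
    fun a v hv S hS => hS.1.2.2.1 a v (hv S hS), fun v hv S hS => hS.1.2.2.2.1 v (hv S hS),
    fun v hv S hS => hS.1.2.2.2.2 v (hv S hS)⟩

lemma mem_codeGen2 (c₀ : ZMod r₁ × ZMod r₂ → F) : c₀ ∈ codeGen2 c₀ := fun _ hS => hS.2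

variable [NeZero r₁] [NeZero r₂]

/-- The words whose transform vanishes wherever that of `c₀` does form an ideal containing
`c₀`. -/
lemma dft2_eq_zero_of_mem {α₁ α₂ : L} (hα₁ : IsPrimitiveRoot α₁ r₁)
    (hα₂ : IsPrimitiveRoot α₂ r₂) (c₀ c : ZMod r₁ × ZMod r₂ → F) (hc : c ∈ codeGen2 c₀)
    (j : ZMod r₁ × ZMod r₂) (hj : dft2 α₁ α₂ c₀ j = 0) : dft2 α₁ α₂ c j = 0 := by
  refine hc {c | dft2 α₁ α₂ c j = 0} ⟨⟨?_, ?_, ?_, ?_, ?_⟩, hj⟩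
  · simp [dft2]
  · intro u hu v hv
    simp only [Set.mem_ofPred_eq, dft2] at hu hv ⊢
    simp only [Pi.add_apply, map_add, add_mul, Finset.sum_add_distrib, hu, hv, add_zero]
  · intro a v hv
    simp only [Set.mem_ofPred_eq, dft2] at hv ⊢
    simp only [Pi.smul_apply, smul_eq_mul, map_mul, mul_assoc] at hv ⊢
    rw [← Finset.mul_sum, hv, mul_zero]
  · intro v hv
    simp only [Set.mem_ofPred_eq, dft2_eq hα₁ hα₂, ft2] at hv ⊢
    rw [← Equiv.sum_comp (Equiv.addRight ((1, 0) : ZMod r₁ × ZMod r₂))]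
    simp only [shiftX, Equiv.coe_addRight, Prod.fst_add, Prod.snd_add, add_sub_cancel_right,
      add_zero, mul_add, mul_one, AddChar.map_add_eq_mul]
    rw [← mul_zero (ch hα₁ j.1), ← hv, Finset.mul_sum]
    exact Finset.sum_congr rfl fun p _ => by ring
  · intro v hv
    simp only [Set.mem_ofPred_eq, dft2_eq hα₁ hα₂, ft2] at hv ⊢
    rw [← Equiv.sum_comp (Equiv.addRight ((0, 1) : ZMod r₁ × ZMod r₂))]
    simp only [shiftY, Equiv.coe_addRight, Prod.fst_add, Prod.snd_add, add_sub_cancel_right,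
      add_zero, mul_add, mul_one, AddChar.map_add_eq_mul]
    rw [← mul_zero (ch hα₂ j.2), ← hv, Finset.mul_sum]
    exact Finset.sum_congr rfl fun p _ => by ring

lemma dft2_gen (a : ZMod r₁ → L) (b : ZMod r₂ → L)
    {α₁ α₂ : L} (hα₁ : IsPrimitiveRoot α₁ r₁)
    (hα₂ : IsPrimitiveRoot α₂ r₂) (h₁ : ZMod r₁) (h₂ : ZMod r₂) (c₀ : ZMod r₁ × ZMod r₂ → F)
    (hc₀ : ∀ p, algebraMap F L (c₀ p) =
      invDFT1 α₁ (shiftBy h₁.val a) p.1 * invDFT1 α₂ (shiftBy h₂.val b) p.2) :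
    dft2 α₁ α₂ c₀ = prodPoly (shiftBy h₁.val a) (shiftBy h₂.val b) := by
  funext j
  rw [dft2_eq hα₁ hα₂, prodPoly]
  conv_rhs => rw [← ft_invDFT1 hα₁ (shiftBy h₁.val a), ← ft_invDFT1 hα₂ (shiftBy h₂.val b)]
  simp only [ft2, ft, hc₀, Finset.sum_mul_sum, Fintype.sum_prod_type]
  refine Finset.sum_congr rfl fun x _ => Finset.sum_congr rfl fun y _ => ?_
  ring

lemma wt_gen_le (a : ZMod r₁ → L) (b : ZMod r₂ → L)
    {α₁ α₂ : L} (hα₁ : IsPrimitiveRoot α₁ r₁)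
    (hα₂ : IsPrimitiveRoot α₂ r₂) (h₁ : ZMod r₁) (h₂ : ZMod r₂) (c₀ : ZMod r₁ × ZMod r₂ → F)
    (hc₀ : ∀ p, algebraMap F L (c₀ p) =
      invDFT1 α₁ (shiftBy h₁.val a) p.1 * invDFT1 α₂ (shiftBy h₂.val b) p.2)
    (ha : toPoly a ∣ (X ^ r₁ - 1 : Polynomial L))
    (hb : toPoly b ∣ (X ^ r₂ - 1 : Polynomial L)) :
    wt c₀ ≤ (r₁ - (toPoly a).natDegree) * (r₂ - (toPoly b).natDegree) := by
  refine le_trans ?_ (Nat.mul_le_mul (wt_invDFT1_le hα₁ a ha h₁) (wt_invDFT1_le hα₂ b hb h₂))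
  simp only [wt]
  rw [← Finset.card_product]
  refine Finset.card_le_card fun p hp => ?_
  simp only [Finset.mem_filter, Finset.mem_univ, true_and, Finset.mem_product] at hp ⊢
  have : algebraMap F L (c₀ p) ≠ 0 := by simpa using hp
  rw [hc₀] at this
  exact ⟨left_ne_zero_of_mul this, right_ne_zero_of_mul this⟩

lemma gen_ne_zero (a : ZMod r₁ → L) (b : ZMod r₂ → L)
    {α₁ α₂ : L} (hα₁ : IsPrimitiveRoot α₁ r₁)
    (hα₂ : IsPrimitiveRoot α₂ r₂) (h₁ : ZMod r₁) (h₂ : ZMod r₂) (c₀ : ZMod r₁ × ZMod r₂ → F)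
    (hc₀ : ∀ p, algebraMap F L (c₀ p) =
      invDFT1 α₁ (shiftBy h₁.val a) p.1 * invDFT1 α₂ (shiftBy h₂.val b) p.2)
    (ha : toPoly a ∣ (X ^ r₁ - 1 : Polynomial L))
    (hb : toPoly b ∣ (X ^ r₂ - 1 : Polynomial L)) : c₀ ≠ 0 := by
  intro h0
  obtain ⟨i, hi⟩ := Function.ne_iff.1 (shift_ne_zero a ha h₁)
  obtain ⟨j, hj⟩ := Function.ne_iff.1 (shift_ne_zero b hb h₂)
  have h := congrFun (dft2_gen a b hα₁ hα₂ h₁ h₂ c₀ hc₀) (i, j)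
  rw [h0] at h
  exact mul_ne_zero hi hj (h.symm.trans (by simp [dft2]))

lemma bchDelta_dft2_le {β₁ β₂ : L} (hβ₁ : IsPrimitiveRoot β₁ r₁) (hβ₂ : IsPrimitiveRoot β₂ r₂)
    (c : ZMod r₁ × ZMod r₂ → F) : bchDelta (dft2 β₁ β₂ c) ≤ wt c := by
  rw [dft2_eq hβ₁ hβ₂]
  refine (bchDelta_le hβ₁ hβ₂ _).trans (le_of_eq ?_)
  simp [wt]

/-- The runs of zeros after the top degrees of `a` and `b` are common to the transforms of all
codewords. -/
lemma le_bchDelta_of_mem (a : ZMod r₁ → L) (b : ZMod r₂ → L)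
    {α₁ α₂ : L} (hα₁ : IsPrimitiveRoot α₁ r₁)
    (hα₂ : IsPrimitiveRoot α₂ r₂) (h₁ : ZMod r₁) (h₂ : ZMod r₂) (c₀ : ZMod r₁ × ZMod r₂ → F)
    (hc₀ : ∀ p, algebraMap F L (c₀ p) =
      invDFT1 α₁ (shiftBy h₁.val a) p.1 * invDFT1 α₂ (shiftBy h₂.val b) p.2)
    (c : ZMod r₁ × ZMod r₂ → F) (hc : c ∈ codeGen2 c₀) (hne : c ≠ 0) :
    (r₁ - (toPoly a).natDegree) * (r₂ - (toPoly b).natDegree) ≤ bchDelta (dft2 α₁ α₂ c) := by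
  have hsupp : ∀ p, dft2 α₁ α₂ c p ≠ 0 →
      shiftBy h₁.val a p.1 ≠ 0 ∧ shiftBy h₂.val b p.2 ≠ 0 := by
    intro p hp
    have : dft2 α₁ α₂ c₀ p ≠ 0 := fun h0 =>
      hp (dft2_eq_zero_of_mem hα₁ hα₂ c₀ c hc p h0)
    rw [dft2_gen a b hα₁ hα₂ h₁ h₂ c₀ hc₀] at this
    exact ⟨left_ne_zero_of_mul this, right_ne_zero_of_mul this⟩
  refine mul_le_bchDelta (N₁ := {i | shiftBy h₁.val a i ≠ 0}ᶜ)
    (N₂ := {j | shiftBy h₂.val b j ≠ 0}ᶜ) ?_ (fun p hp hmem => hmem (hsupp p hp).1)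
    (fun p hp hmem => hmem (hsupp p hp).2) (bchRel_shift a h₁) (bchRel_shift b h₂)
  intro h0
  rw [dft2_eq hα₁ hα₂] at h0
  have := eq_zero_of_ft2 hα₁ hα₂ _ h0
  refine hne (funext fun p => ?_)
  have hp := congrFun this p
  simpa using hp

lemma minDist_gen (a : ZMod r₁ → L) (b : ZMod r₂ → L)
    {α₁ α₂ : L} (hα₁ : IsPrimitiveRoot α₁ r₁)
    (hα₂ : IsPrimitiveRoot α₂ r₂) (h₁ : ZMod r₁) (h₂ : ZMod r₂) (c₀ : ZMod r₁ × ZMod r₂ → F)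
    (hc₀ : ∀ p, algebraMap F L (c₀ p) =
      invDFT1 α₁ (shiftBy h₁.val a) p.1 * invDFT1 α₂ (shiftBy h₂.val b) p.2)
    (ha : toPoly a ∣ (X ^ r₁ - 1 : Polynomial L))
    (hb : toPoly b ∣ (X ^ r₂ - 1 : Polynomial L)) :
    minDist (codeGen2 c₀) = (r₁ - (toPoly a).natDegree) * (r₂ - (toPoly b).natDegree) := by
  have hmem : wt c₀ ∈ wt '' (codeGen2 c₀ \ {0}) :=
    ⟨c₀, ⟨mem_codeGen2 c₀, gen_ne_zero a b hα₁ hα₂ h₁ h₂ c₀ hc₀ ha hb⟩, rfl⟩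
  refine le_antisymm ((Nat.sInf_le hmem).trans (wt_gen_le a b hα₁ hα₂ h₁ h₂ c₀ hc₀ ha hb))
    (le_csInf ⟨_, hmem⟩ ?_)
  rintro _ ⟨c, ⟨hc, hne⟩, rfl⟩
  exact (le_bchDelta_of_mem a b hα₁ hα₂ h₁ h₂ c₀ hc₀ c hc hne).trans
    (bchDelta_dft2_le hα₁ hα₂ c)

lemma bchDeltaCode2_gen (a : ZMod r₁ → L) (b : ZMod r₂ → L)
    {α₁ α₂ : L} (hα₁ : IsPrimitiveRoot α₁ r₁)
    (hα₂ : IsPrimitiveRoot α₂ r₂) (h₁ : ZMod r₁) (h₂ : ZMod r₂) (c₀ : ZMod r₁ × ZMod r₂ → F)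
    (hc₀ : ∀ p, algebraMap F L (c₀ p) =
      invDFT1 α₁ (shiftBy h₁.val a) p.1 * invDFT1 α₂ (shiftBy h₂.val b) p.2)
    [Fintype F] (ha : toPoly a ∣ (X ^ r₁ - 1 : Polynomial L))
    (hb : toPoly b ∣ (X ^ r₂ - 1 : Polynomial L)) :
    bchDeltaCode2 L (codeGen2 c₀) =
      (r₁ - (toPoly a).natDegree) * (r₂ - (toPoly b).natDegree) := by
  have hne := gen_ne_zero a b hα₁ hα₂ h₁ h₂ c₀ hc₀ ha hb
  have hub : ∀ β₁ β₂ : L, IsPrimitiveRoot β₁ r₁ → IsPrimitiveRoot β₂ r₂ →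
      bchDeltaCodeAt2 β₁ β₂ (codeGen2 c₀) ≤
        (r₁ - (toPoly a).natDegree) * (r₂ - (toPoly b).natDegree) := fun β₁ β₂ hβ₁ hβ₂ =>
    le_trans (Nat.sInf_le ⟨c₀, mem_codeGen2 c₀, hne, rfl⟩)
      ((bchDelta_dft2_le hβ₁ hβ₂ c₀).trans (wt_gen_le a b hα₁ hα₂ h₁ h₂ c₀ hc₀ ha hb))
  refine le_antisymm (csSup_le ⟨_, α₁, α₂, hα₁, hα₂, rfl⟩ ?_) ?_
  · rintro _ ⟨β₁, β₂, hβ₁, hβ₂, rfl⟩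
    exact hub β₁ β₂ hβ₁ hβ₂
  · have hlow : (r₁ - (toPoly a).natDegree) * (r₂ - (toPoly b).natDegree) ≤
        bchDeltaCodeAt2 α₁ α₂ (codeGen2 c₀) := by
      refine le_csInf ⟨_, c₀, mem_codeGen2 c₀, hne, rfl⟩ ?_
      rintro _ ⟨c, hc, hc0, rfl⟩
      exact le_bchDelta_of_mem a b hα₁ hα₂ h₁ h₂ c₀ hc₀ c hc hc0
    refine hlow.trans (le_csSup
      ⟨(r₁ - (toPoly a).natDegree) * (r₂ - (toPoly b).natDegree), ?_⟩ ⟨α₁, α₂, hα₁, hα₂, rfl⟩)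
    rintro _ ⟨β₁, β₂, hβ₁, hβ₂, rfl⟩
    exact hub β₁ β₂ hβ₁ hβ₂

/-- The matrix of `a * b` is the transform of an outer product over `L`, so the bounds above
apply to it with `L` itself as the field of coefficients and no shift. -/
lemma bchDelta_prodPoly (a : ZMod r₁ → L) (b : ZMod r₂ → L) {α₁ α₂ : L}
    (hα₁ : IsPrimitiveRoot α₁ r₁) (hα₂ : IsPrimitiveRoot α₂ r₂)
    (ha : toPoly a ∣ (X ^ r₁ - 1 : Polynomial L))
    (hb : toPoly b ∣ (X ^ r₂ - 1 : Polynomial L)) :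
    bchDelta (prodPoly a b) = (r₁ - (toPoly a).natDegree) * (r₂ - (toPoly b).natDegree) := by
  let c : ZMod r₁ × ZMod r₂ → L := fun p =>
    invDFT1 α₁ (shiftBy (0 : ZMod r₁).val a) p.1 * invDFT1 α₂ (shiftBy (0 : ZMod r₂).val b) p.2
  have hc : ∀ p, algebraMap L L (c p) = invDFT1 α₁ (shiftBy (0 : ZMod r₁).val a) p.1 *
      invDFT1 α₂ (shiftBy (0 : ZMod r₂).val b) p.2 := fun _ => rfl
  have hd := dft2_gen a b hα₁ hα₂ 0 0 c hc
  have e : prodPoly a b = dft2 α₁ α₂ c := by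
    rw [hd]
    funext p
    simp [prodPoly, shiftBy]
  rw [e]
  exact le_antisymm
    ((bchDelta_dft2_le hα₁ hα₂ c).trans (wt_gen_le a b hα₁ hα₂ 0 0 c hc ha hb))
    (le_bchDelta_of_mem a b hα₁ hα₂ 0 0 c hc c (mem_codeGen2 c)
      (gen_ne_zero a b hα₁ hα₂ 0 0 c hc ha hb))

end Codes

end DSAux

/-- Construction of abelian codes whose BCH apparent distance reaches
the minimum distance, from univariate divisors `a ∣ X₁^{r₁}-1`, `b ∣ X₂^{r₂}-1` whose
shifted inverse DFTs have coefficients in `𝔽_q`. -/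
theorem stmt_16 {F : Type} [Field F] [Fintype F] {L : Type} [Field L] [Algebra F L]
    (r₁ r₂ : ℕ) [NeZero r₁] [NeZero r₂]
    (hr₁ : Nat.Coprime r₁ (Fintype.card F)) (hr₂ : Nat.Coprime r₂ (Fintype.card F))
    (K : IntermediateField F L)
    (a : ZMod r₁ → L) (b : ZMod r₂ → L)
    (haK : ∀ i, a i ∈ K) (hbK : ∀ j, b j ∈ K)
    (hadvd : toPoly a ∣ (Polynomial.X ^ r₁ - 1 : Polynomial L))
    (hbdvd : toPoly b ∣ (Polynomial.X ^ r₂ - 1 : Polynomial L))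
    (α₁ α₂ : L) (hα₁ : IsPrimitiveRoot α₁ r₁) (hα₂ : IsPrimitiveRoot α₂ r₂)
    (h₁ : ZMod r₁) (h₂ : ZMod r₂)
    (hFa : ∀ i, invDFT1 α₁ (shiftBy h₁.val a) i ∈ Set.range (algebraMap F L))
    (hFb : ∀ j, invDFT1 α₂ (shiftBy h₂.val b) j ∈ Set.range (algebraMap F L)) :
    (∀ c₀ : ZMod r₁ × ZMod r₂ → F,
      (∀ p, algebraMap F L (c₀ p) =
          invDFT1 α₁ (shiftBy h₁.val a) p.1 * invDFT1 α₂ (shiftBy h₂.val b) p.2) →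
        bchDelta (prodPoly a b) = bchDeltaCode2 L (codeGen2 c₀) ∧
        bchDeltaCode2 L (codeGen2 c₀) = minDist (codeGen2 c₀)) ∧
    (∀ β₁ β₂ : L, IsPrimitiveRoot β₁ r₁ → IsPrimitiveRoot β₂ r₂ →
      ∃ cβ : ZMod r₁ × ZMod r₂ → F,
        (∀ p, algebraMap F L (cβ p) =
            invDFT1 β₁ (shiftBy h₁.val a) p.1 * invDFT1 β₂ (shiftBy h₂.val b) p.2) ∧
        IsAbelianCode2 (codeGen2 cβ) ∧
        bchDelta (prodPoly a b) = bchDeltaCode2 L (codeGen2 cβ) ∧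
        bchDeltaCode2 L (codeGen2 cβ) = minDist (codeGen2 cβ) ∧
        (∀ c₀ : ZMod r₁ × ZMod r₂ → F,
          (∀ p, algebraMap F L (c₀ p) =
              invDFT1 α₁ (shiftBy h₁.val a) p.1 * invDFT1 α₂ (shiftBy h₂.val b) p.2) →
            minDist (codeGen2 cβ) = minDist (codeGen2 c₀))) := by
  have hΔ := DSAux.bchDelta_prodPoly a b hα₁ hα₂ hadvd hbdvd
  refine ⟨fun c₀ hc₀ => ?_, fun β₁ β₂ hβ₁ hβ₂ => ?_⟩
  · rw [hΔ, DSAux.bchDeltaCode2_gen a b hα₁ hα₂ h₁ h₂ c₀ hc₀ hadvd hbdvd,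
      DSAux.minDist_gen a b hα₁ hα₂ h₁ h₂ c₀ hc₀ hadvd hbdvd]
    exact ⟨rfl, rfl⟩
  · have h : ∀ p : ZMod r₁ × ZMod r₂, ∃ x : F, algebraMap F L x =
        invDFT1 β₁ (shiftBy h₁.val a) p.1 * invDFT1 β₂ (shiftBy h₂.val b) p.2 := by
      intro p
      obtain ⟨x, hx⟩ := DSAux.invDFT1_mem_of_mem hα₁ hβ₁ _ _ hFa p.1
      obtain ⟨y, hy⟩ := DSAux.invDFT1_mem_of_mem hα₂ hβ₂ _ _ hFb p.2
      exact ⟨x * y, by rw [map_mul, hx, hy]⟩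
    choose cβ hcβ using h
    refine ⟨cβ, hcβ, DSAux.isAbelianCode2_codeGen2 cβ, ?_, ?_, fun c₀ hc₀ => ?_⟩
    · rw [hΔ, DSAux.bchDeltaCode2_gen a b hβ₁ hβ₂ h₁ h₂ cβ hcβ hadvd hbdvd]
    · rw [DSAux.bchDeltaCode2_gen a b hβ₁ hβ₂ h₁ h₂ cβ hcβ hadvd hbdvd,
        DSAux.minDist_gen a b hβ₁ hβ₂ h₁ h₂ cβ hcβ hadvd hbdvd]
    · rw [DSAux.minDist_gen a b hβ₁ hβ₂ h₁ h₂ cβ hcβ hadvd hbdvd,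
        DSAux.minDist_gen a b hα₁ hα₂ h₁ h₂ c₀ hc₀ hadvd hbdvd]
end

section
/- Let 𝕂 be an intermediate field 𝔽_q ⊆ 𝕂 ⊆ 𝕃, and let a = a(X_1) ∈ 𝕂(r_1) and b = b(X_2) ∈ 𝕂(r_2) be such that a ∣ X_1^{r_1}−1 and b ∣ X_2^{r_2}−1. Suppose there exist (α_1,α_2) ∈ U, h_1 ∈ ℤ_{r_1} and h_2 ∈ ℤ_{r_2} such that [(X_1^{h_1}a)(α_1^i)]^q = (X_1^{h_1}a)(α_1^i) for all i ∈ {0,…,r_1−1} and [(X_2^{h_2}b)(α_2^j)]^q = (X_2^{h_2}b)(α_2^j) for all j ∈ {0,…,r_2−1} (where X^h a is reduced modulo X^r−1). Then for every β_1 ∈ U_{r_1} and β_2 ∈ U_{r_2}, the abelian code C_{(β_1,β_2)} generated by φ^{-1}_{β_1, X_1^{h_1}a}·φ^{-1}_{β_2, X_2^{h_2}b} in 𝔽_q(r_1,r_2) satisfies Δ(M(ab)) = Δ(C_{(β_1,β_2)}) = d(C_{(β_1,β_2)}), where Δ is the BCH apparent distance. -/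
/-!
Let `A = δ̄_BCH(ℤ_{r₁} ∖ supp a)` and `B = δ̄_BCH(ℤ_{r₂} ∖ supp b)`. The support of `ab` is a
rectangle, so `Δ(M(ab)) = A·B` (`bchDelta_prodPoly`), and the theorem follows from the cycle
`A·B ≤ Δ(C) ≤ d(C) ≤ wt(c) ≤ A·B`, where `c` is the generator of `C = C_{(β₁,β₂)}`.

* `c` has coefficients in `𝔽_q`, because each of its entries is, up to `r₁r₂`, a product of values
  of `X₁^{h₁}a` and `X₂^{h₂}b` at powers of `α₁`, `α₂`, and those are fixed by Frobenius
  (`invDFT1_mem_range`).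
* `A·B ≤ Δ(C)`: the transform at `(β₁,β₂)` of every word of `C` is supported in a translate of
  `supp a × supp b`, and `δ̄_BCH` is monotone and translation invariant (`le_bchDelta`,
  `bchOpt_shiftBy`).
* `Δ(C) ≤ d(C)`: the apparent distance of the transform of a word is at most its weight
  (`bchDelta_le_wt`), by applying the BCH bound (`bch_bound`) first to a row and then to columns.
* `wt(c) ≤ A·B`: `c` is a tensor product. If `a` divides `X^r - 1` and has degree `d`, at most
  `r - d` of the `r`-th roots of unity are nonzeros of `a`, whereas `a` has `r - d - 1` consecutive
  zero coefficients above degree `d` (`wt_invDFT1_le`).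
-/

open scoped Classical
open Polynomial

open DS DS2

/-! ### Powers of roots of unity and the one-variable transform -/

theorem pow_val_add {L : Type} [CommRing L] {n : ℕ} [NeZero n] {x : L} (hx : x ^ n = 1)
    (i j : ZMod n) : x ^ (i + j).val = x ^ i.val * x ^ j.val := by
  rw [ZMod.val_add, ← pow_add, ← pow_eq_pow_mod _ hx]

theorem pow_val_natCast {L : Type} [CommRing L] {n : ℕ} [NeZero n] {x : L} (hx : x ^ n = 1)
    (t : ℕ) : x ^ (t : ZMod n).val = x ^ t := by
  rw [ZMod.val_natCast, ← pow_eq_pow_mod _ hx]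

theorem pow_val_injective {L : Type} [Field L] {n : ℕ} [NeZero n] {α : L}
    (hα : IsPrimitiveRoot α n) : Function.Injective fun j : ZMod n => α ^ j.val := fun i j h =>
  ZMod.val_injective n (hα.pow_inj (ZMod.val_lt i) (ZMod.val_lt j) h)

/-- The sum of the powers of a nontrivial `n`-th root of unity vanishes: multiplying it by
`x` only permutes the summands. -/
theorem sum_pow_val_eq_zero {L : Type} [Field L] {n : ℕ} [NeZero n] {x : L} (hx : x ^ n = 1)
    (hx1 : x ≠ 1) : ∑ j : ZMod n, x ^ j.val = 0 := by
  have h : ∑ j : ZMod n, x ^ (j + ((1 : ℕ) : ZMod n)).val = ∑ j : ZMod n, x ^ j.val :=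
    Equiv.sum_comp (Equiv.addRight ((1 : ℕ) : ZMod n)) fun j : ZMod n => x ^ j.val
  simp only [pow_val_add hx, pow_val_natCast hx, pow_one, ← Finset.sum_mul] at h
  have h2 : (∑ j : ZMod n, x ^ j.val) * (x - 1) = 0 := by rw [mul_sub, h]; ring
  exact (mul_eq_zero.1 h2).resolve_right (sub_ne_zero.2 hx1)

theorem natCast_ne_zero_of_primitive {L : Type} [Field L] {n : ℕ} [NeZero n] {α : L}
    (hα : IsPrimitiveRoot α n) : (n : L) ≠ 0 := hα.neZero'.out

/-- Fourier inversion. -/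
theorem evalV_invDFT1 {L : Type} [Field L] {n : ℕ} [NeZero n] {β : L}
    (hβ : IsPrimitiveRoot β n) (g : ZMod n → L) (i : ZMod n) :
    evalV (invDFT1 β g) (β ^ i.val) = g i := by
  have hβ0 : β ≠ 0 := hβ.ne_zero (NeZero.ne n)
  have key : ∀ k : ZMod n, ∑ j : ZMod n, (β⁻¹ ^ j.val) ^ k.val * (β ^ i.val) ^ j.val
      = if k = i then (n : L) else 0 := by
    intro k
    have e : ∀ j : ZMod n, (β⁻¹ ^ j.val) ^ k.val * (β ^ i.val) ^ j.val
        = (β⁻¹ ^ k.val * β ^ i.val) ^ j.val := by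
      intro j; rw [mul_pow]; congr 1; rw [← pow_mul, ← pow_mul, mul_comm]
    simp only [e]
    split_ifs with h
    · subst h
      rw [← mul_pow, inv_mul_cancel₀ hβ0]
      simp [ZMod.card]
    · apply sum_pow_val_eq_zero
      · rw [mul_pow, pow_right_comm, pow_right_comm β, hβ.inv.pow_eq_one, hβ.pow_eq_one]
        simp
      · intro h1
        apply h
        apply pow_val_injective hβ
        have hk : β ^ k.val ≠ 0 := pow_ne_zero _ hβ0
        rw [inv_pow, inv_mul_eq_one₀ hk] at h1
        exact h1
  have hn := natCast_ne_zero_of_primitive hβ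
  calc evalV (invDFT1 β g) (β ^ i.val)
      = ∑ j : ZMod n, ∑ k : ZMod n, (n : L)⁻¹ * g k *
          ((β⁻¹ ^ j.val) ^ k.val * (β ^ i.val) ^ j.val) := by
        simp only [evalV, invDFT1, Finset.mul_sum, Finset.sum_mul]
        refine Finset.sum_congr rfl fun j _ => Finset.sum_congr rfl fun k _ => ?_
        ring
    _ = ∑ k : ZMod n, (n : L)⁻¹ * g k * (if k = i then (n : L) else 0) := by
        rw [Finset.sum_comm]
        simp only [← Finset.mul_sum, key]
    _ = g i := by
        simp only [mul_ite, mul_zero, Finset.sum_ite_eq', Finset.mem_univ, if_true]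
        field_simp

/-- The value of `X^h·a` at an `n`-th root of unity. -/
theorem evalV_shiftBy {L : Type} [CommRing L] {n : ℕ} [NeZero n] {x : L} (hx : x ^ n = 1)
    (h : ℕ) (v : ZMod n → L) : evalV (shiftBy h v) x = x ^ h * evalV v x := by
  have e := Equiv.sum_comp (Equiv.addRight ((h : ℕ) : ZMod n))
    fun i : ZMod n => shiftBy h v i * x ^ i.val
  simp only [evalV]
  rw [← e, Finset.mul_sum]
  refine Finset.sum_congr rfl fun j _ => ?_
  simp only [shiftBy, Equiv.coe_addRight, add_sub_cancel_right, pow_val_add hx,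
    pow_val_natCast hx]
  ring

/-! ### The BCH bound -/

/-- A set that misses a point contains at most `n - 1` consecutive residues. -/
theorem bchRel_le {n : ℕ} [NeZero n] {N : Set (ZMod n)} {x : ZMod n} (hx : x ∉ N) {a : ℕ}
    (ha : bchRel N a) : a ≤ n := by
  rcases ha with rfl | ⟨_, i0, hi⟩
  · exact NeZero.one_le
  · by_contra! hlt
    apply hx
    have := hi (x - i0).val (by have := ZMod.val_lt (x - i0); omega)
    simpa using this

theorem le_bchOpt {n : ℕ} [NeZero n] {N : Set (ZMod n)} {x : ZMod n} (hx : x ∉ N) {a : ℕ}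
    (ha : bchRel N a) : a ≤ bchOpt n N :=
  le_csSup ⟨n, fun _ hb => bchRel_le hx hb⟩ ha

theorem bchOpt_le {n : ℕ} {N : Set (ZMod n)} {m : ℕ} (h : ∀ a, bchRel N a → a ≤ m) :
    bchOpt n N ≤ m := csSup_le ⟨1, Or.inl rfl⟩ h

theorem bchOpt_mono {n : ℕ} [NeZero n] {N N' : Set (ZMod n)} {x : ZMod n} (hx : x ∉ N')
    (h : N ⊆ N') : bchOpt n N ≤ bchOpt n N' := bchOpt_le fun _ ha =>
  le_bchOpt hx <| ha.imp id fun ⟨h2, i0, hi⟩ => ⟨h2, i0, fun t ht => h (hi t ht)⟩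

/-- Translation invariance of `δ̄_BCH`. -/
theorem bchOpt_shiftBy {L : Type} [Zero L] {n : ℕ} [NeZero n] (h : ℕ) {v : ZMod n → L}
    (hv : v ≠ 0) : bchOpt n {i | v i ≠ 0}ᶜ ≤ bchOpt n {i | shiftBy h v i ≠ 0}ᶜ := by
  obtain ⟨x, hx⟩ := Function.ne_iff.1 hv
  refine bchOpt_le fun a ha => ?_
  refine le_bchOpt (x := x + (h : ZMod n)) (by simpa [shiftBy] using hx) ?_
  refine ha.imp id fun ⟨h2, i0, hi⟩ => ⟨h2, i0 + h, fun t ht => ?_⟩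
  have := hi t ht
  have e : i0 + (h : ZMod n) + t - h = i0 + t := by ring
  simpa [shiftBy, e] using this

/-- If the weight of `v` were `w ≤ a - 1`, the `a - 1` consecutive zeros of the transform would
make `∑ⱼ vⱼ α^{i₀j} p(αʲ)` vanish for every polynomial `p` of degree less than `a - 1`; taking
for `p` the product of `X - αʲ` over all but one point of the support isolates one nonzero
summand. -/
theorem bch_bound {L : Type} [Field L] {n : ℕ} [NeZero n] {α : L} (hα : IsPrimitiveRoot α n)
    {v : ZMod n → L} (hv : v ≠ 0) {N : Set (ZMod n)}
    (hN : ∀ i ∈ N, evalV v (α ^ i.val) = 0) : bchOpt n N ≤ wt v := by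
  obtain ⟨j0, hj0⟩ := Function.ne_iff.1 hv
  have hj0' : j0 ∈ Finset.univ.filter fun i => v i ≠ 0 := by simpa using hj0
  have hpos : 0 < wt v := Finset.card_pos.2 ⟨j0, hj0'⟩
  refine bchOpt_le fun a ha => ?_
  rcases ha with rfl | ⟨ha2, i0, hi⟩
  · exact hpos
  by_contra! hlt
  have hmon : ∀ t < a - 1, ∑ j : ZMod n, v j * (α ^ i0.val) ^ j.val * (α ^ j.val) ^ t = 0 := by
    intro t ht
    have h := hN _ (hi t ht)
    rw [pow_val_add hα.pow_eq_one, pow_val_natCast hα.pow_eq_one] at h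
    rw [← h, evalV]
    refine Finset.sum_congr rfl fun j _ => ?_
    rw [mul_pow, mul_assoc, ← pow_mul α j.val, ← pow_mul α t, mul_comm t]
  have hpoly : ∀ p : Polynomial L, p.natDegree < a - 1 →
      ∑ j : ZMod n, v j * (α ^ i0.val) ^ j.val * p.eval (α ^ j.val) = 0 := by
    intro p hp
    simp only [Polynomial.eval_eq_sum_range' hp, Finset.mul_sum]
    rw [Finset.sum_comm]
    refine Finset.sum_eq_zero fun t ht => ?_
    rw [← mul_zero (p.coeff t), ← hmon t (Finset.mem_range.1 ht), Finset.mul_sum]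
    refine Finset.sum_congr rfl fun j _ => ?_
    ring
  set T := (Finset.univ.filter fun i => v i ≠ 0).erase j0 with hT
  have hTc : T.card + 1 = wt v := Finset.card_erase_add_one hj0'
  have h := hpoly (∏ j ∈ T, (X - C (α ^ j.val))) (by
    rw [Polynomial.natDegree_prod_of_monic _ _ fun j _ => monic_X_sub_C _]
    simp only [natDegree_X_sub_C, Finset.sum_const, smul_eq_mul, mul_one]
    omega)
  rw [Finset.sum_eq_single j0] at h
  · rw [mul_eq_zero, mul_eq_zero, Polynomial.eval_prod, Finset.prod_eq_zero_iff] at h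
    rcases h with (h | h) | ⟨j, hj, h⟩
    · exact hj0 h
    · exact pow_ne_zero _ (pow_ne_zero _ (hα.ne_zero (NeZero.ne n))) h
    · have : α ^ j0.val = α ^ j.val := by simpa [sub_eq_zero] using h
      exact (Finset.mem_erase.1 hj).1 (pow_val_injective hα this).symm
  · intro j _ hj
    by_cases hvj : v j = 0
    · simp [hvj]
    · have : j ∈ T := Finset.mem_erase.2 ⟨hj, by simpa using hvj⟩
      rw [Polynomial.eval_prod, Finset.prod_eq_zero this (by simp), mul_zero]
  · simp

/-- Injectivity of the Fourier transform. -/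
theorem exists_evalV_ne_zero {L : Type} [Field L] {n : ℕ} [NeZero n] {α : L}
    (hα : IsPrimitiveRoot α n) {v : ZMod n → L} (hv : v ≠ 0) :
    ∃ i : ZMod n, evalV v (α ^ i.val) ≠ 0 := by
  by_contra! h
  apply hv
  -- Inversion at `α⁻¹` expresses `v j` through the values of `v` at the powers of `α`.
  have hβ := hα.inv
  funext j
  have := evalV_invDFT1 hβ v j
  rw [← this, evalV]
  refine Finset.sum_eq_zero fun i _ => ?_
  simp [invDFT1, h]

/-! ### The apparent distance bounds the weight -/

/-- Splitting the bivariate transform into two univariate ones. -/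
theorem dft2_eq_evalV {F L : Type} [Field F] [Field L] [Algebra F L] {r₁ r₂ : ℕ} [NeZero r₁]
    [NeZero r₂] (α₁ α₂ : L) (c : ZMod r₁ × ZMod r₂ → F) (k : ZMod r₁) (j : ZMod r₂) :
    dft2 α₁ α₂ c (k, j) = evalV (fun p₂ : ZMod r₂ =>
      evalV (fun p₁ : ZMod r₁ => algebraMap F L (c (p₁, p₂))) (α₁ ^ k.val)) (α₂ ^ j.val) := by
  simp only [dft2, evalV, Fintype.sum_prod_type, Finset.sum_mul]
  rw [Finset.sum_comm]

theorem dft2_swap {F L : Type} [Field F] [Field L] [Algebra F L] {r₁ r₂ : ℕ} [NeZero r₁]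
    [NeZero r₂] (α₁ α₂ : L) (c : ZMod r₁ × ZMod r₂ → F) :
    dft2 α₂ α₁ (c ∘ Prod.swap) = dft2 α₁ α₂ c ∘ Prod.swap := by
  funext p
  simp only [dft2, Function.comp]
  refine Fintype.sum_equiv (Equiv.prodComm _ _) _ _ fun q => ?_
  simp only [Equiv.prodComm_apply, Prod.fst_swap, Prod.snd_swap]
  ring

theorem wt_swap {F : Type} [Field F] {r₁ r₂ : ℕ} [NeZero r₁]
    [NeZero r₂] (c : ZMod r₁ × ZMod r₂ → F) : wt (c ∘ Prod.swap) = wt c := by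
  refine Finset.card_equiv (Equiv.prodComm _ _) fun q => ?_
  simp

/-- The weight of a matrix is the sum of the weights of its columns. -/
theorem wt_eq_sum {F : Type} [Zero F] {r₁ r₂ : ℕ} [NeZero r₁] [NeZero r₂]
    (c : ZMod r₁ × ZMod r₂ → F) : wt c = ∑ p₂ : ZMod r₂, wt fun p₁ => c (p₁, p₂) := by
  simp only [wt, Finset.card_filter]
  rw [Fintype.sum_prod_type, Finset.sum_comm]

/-- For a nonzero row `k` of the transform, the partial evaluation `c(α₁^k, X₂)` has at least
`Δ(row k)` nonzero coefficients, and each of them sits over a nonzero column of `c`, whose own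
transform is supported in the row support and which therefore has weight at least `ω₁`. -/
theorem bchD1_le_wt {F L : Type} [Field F] [Field L] [Algebra F L] {r₁ r₂ : ℕ} [NeZero r₁]
    [NeZero r₂] {α₁ α₂ : L} (hα₁ : IsPrimitiveRoot α₁ r₁) (hα₂ : IsPrimitiveRoot α₂ r₂)
    (c : ZMod r₁ × ZMod r₂ → F) (hM : dft2 α₁ α₂ c ≠ 0) :
    bchD1 (dft2 α₁ α₂ c) ≤ wt c := by
  set M := dft2 α₁ α₂ c with hMdef
  let u : ZMod r₁ → ZMod r₂ → L := fun k p₂ =>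
    evalV (fun p₁ : ZMod r₁ => algebraMap F L (c (p₁, p₂))) (α₁ ^ k.val)
  have hrow : ∀ k j, row M k j = evalV (u k) (α₂ ^ j.val) := fun k j =>
    dft2_eq_evalV α₁ α₂ c k j
  have hne : (supp1 M).Nonempty := by
    obtain ⟨⟨k, j⟩, h⟩ := Function.ne_iff.1 hM
    exact ⟨k, fun h0 => h (congrFun h0 j)⟩
  obtain ⟨k, hk, hke⟩ := (hne.image fun k => bchV (row M k)).csSup_mem (Set.toFinite _)
  have hu : u k ≠ 0 := by
    intro h0
    apply hk
    funext j
    rw [hrow, h0]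
    simp [evalV]
  have hε : bchEps1 M ≤ wt (u k) := by
    rw [bchEps1, ← hke]
    simp only [bchV]
    rw [if_neg (show row M k ≠ 0 from hk)]
    refine bch_bound hα₂ hu fun j hj => ?_
    rw [← hrow]
    simpa using hj
  have hω : ∀ p₂, u k p₂ ≠ 0 → bchOmega1 M ≤ wt fun p₁ => c (p₁, p₂) := by
    intro p₂ hp
    have hw : wt (fun p₁ => c (p₁, p₂)) = wt fun p₁ => algebraMap F L (c (p₁, p₂)) := by
      simp [wt]
    rw [hw]
    refine bch_bound hα₁ (fun h0 => hp ?_) fun i hi => ?_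
    · simp only [u]
      rw [h0]
      simp [evalV]
    · by_contra hne0
      have hui : u i ≠ 0 := fun h0 => hne0 (congrFun h0 p₂)
      obtain ⟨j, hj⟩ := exists_evalV_ne_zero hα₂ hui
      rw [← hrow] at hj
      exact hi fun h0 => hj (congrFun h0 j)
  calc bchD1 M ≤ bchOmega1 M * wt (u k) := Nat.mul_le_mul_left _ hε
    _ = ∑ p₂ ∈ Finset.univ.filter fun p₂ => u k p₂ ≠ 0, bchOmega1 M := by
        rw [Finset.sum_const, smul_eq_mul, mul_comm]; rfl
    _ ≤ ∑ p₂ ∈ Finset.univ.filter fun p₂ => u k p₂ ≠ 0, wt fun p₁ => c (p₁, p₂) :=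
        Finset.sum_le_sum fun p₂ hp => hω p₂ (Finset.mem_filter.1 hp).2
    _ ≤ ∑ p₂ : ZMod r₂, wt fun p₁ => c (p₁, p₂) :=
        Finset.sum_le_sum_of_subset (Finset.filter_subset _ _)
    _ = wt c := (wt_eq_sum c).symm

theorem bchDelta_le_wt {F L : Type} [Field F] [Field L] [Algebra F L] {r₁ r₂ : ℕ} [NeZero r₁]
    [NeZero r₂] {α₁ α₂ : L} (hα₁ : IsPrimitiveRoot α₁ r₁) (hα₂ : IsPrimitiveRoot α₂ r₂)
    (c : ZMod r₁ × ZMod r₂ → F) : bchDelta (dft2 α₁ α₂ c) ≤ wt c := by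
  rw [bchDelta]
  split_ifs with hM
  · exact Nat.zero_le _
  refine max_le (bchD1_le_wt hα₁ hα₂ c hM) ?_
  -- `Δ₂` of a matrix is, by definition, `Δ₁` of its transpose.
  have h := bchD1_le_wt hα₂ hα₁ (c ∘ Prod.swap) (by
    rw [dft2_swap]
    intro h0
    apply hM
    funext p
    simpa using congrFun h0 p.swap)
  rw [dft2_swap, wt_swap] at h
  exact h

theorem dft2_ne_zero {F L : Type} [Field F] [Field L] [Algebra F L] {r₁ r₂ : ℕ} [NeZero r₁]
    [NeZero r₂] {α₁ α₂ : L} (hα₁ : IsPrimitiveRoot α₁ r₁) (hα₂ : IsPrimitiveRoot α₂ r₂)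
    {c : ZMod r₁ × ZMod r₂ → F} (hc : c ≠ 0) : dft2 α₁ α₂ c ≠ 0 := by
  obtain ⟨⟨p₁, p₂⟩, hp⟩ := Function.ne_iff.1 hc
  have h1 : (fun p₁ : ZMod r₁ => algebraMap F L (c (p₁, p₂))) ≠ 0 := fun h0 => hp (by
    simpa using congrFun h0 p₁)
  obtain ⟨k, hk⟩ := exists_evalV_ne_zero hα₁ h1
  obtain ⟨j, hj⟩ := exists_evalV_ne_zero hα₂ (v := fun p₂ : ZMod r₂ =>
    evalV (fun p₁ : ZMod r₁ => algebraMap F L (c (p₁, p₂))) (α₁ ^ k.val))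
    fun h0 => hk (congrFun h0 p₂)
  intro h0
  exact hj (by rw [← dft2_eq_evalV, h0]; rfl)

/-! ### Matrices supported in a rectangle -/

/-- The apparent distance of a nonzero matrix supported in `S₁ × S₂` is at least
`δ̄_BCH(S₁ᶜ) · δ̄_BCH(S₂ᶜ)`. -/
theorem le_bchDelta {L : Type} [Zero L] {r₁ r₂ : ℕ} [NeZero r₁] [NeZero r₂]
    {M : ZMod r₁ × ZMod r₂ → L} (hM : M ≠ 0) {S₁ : Set (ZMod r₁)} {S₂ : Set (ZMod r₂)}
    (h : ∀ p, M p ≠ 0 → p.1 ∈ S₁ ∧ p.2 ∈ S₂) :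
    bchOpt r₁ S₁ᶜ * bchOpt r₂ S₂ᶜ ≤ bchDelta M := by
  rw [bchDelta, if_neg hM]
  refine le_max_of_le_left (Nat.mul_le_mul ?_ ?_)
  all_goals
    obtain ⟨⟨k, j⟩, hkj⟩ := Function.ne_iff.1 hM
    have hk : k ∈ supp1 M := fun h0 => hkj (congrFun h0 j)
  · refine bchOpt_mono (x := k) (by simpa using hk) (Set.compl_subset_compl.2 fun i hi => ?_)
    obtain ⟨l, hl⟩ := Function.ne_iff.1 hi
    exact (h (i, l) hl).1
  · refine le_trans ?_ (le_csSup (Set.toFinite _).bddAbove (Set.mem_image_of_mem _ hk))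
    simp only [bchV]
    rw [if_neg (show row M k ≠ 0 from hk)]
    refine bchOpt_mono (x := j) (by simpa [row] using hkj)
      (Set.compl_subset_compl.2 fun i hi => ?_)
    exact (h (k, i) hi).2

theorem bchDelta_prodPoly {L : Type} [Field L] {r₁ r₂ : ℕ} [NeZero r₁] [NeZero r₂]
    {a : ZMod r₁ → L} {b : ZMod r₂ → L} (ha : a ≠ 0) (hb : b ≠ 0) :
    bchDelta (prodPoly a b) = bchOpt r₁ {i | a i ≠ 0}ᶜ * bchOpt r₂ {j | b j ≠ 0}ᶜ := by
  obtain ⟨i, hi⟩ := Function.ne_iff.1 ha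
  obtain ⟨j, hj⟩ := Function.ne_iff.1 hb
  have hM : prodPoly a b ≠ 0 := fun h0 =>
    mul_ne_zero hi hj (congrFun h0 (i, j))
  have hrow : ∀ k, row (prodPoly a b) k ≠ 0 ↔ a k ≠ 0 := fun k =>
    ⟨fun h h0 => h (funext fun l => by simp [row, prodPoly, h0]),
      fun h h0 => mul_ne_zero h hj (congrFun h0 j)⟩
  have hcol : ∀ k, col (prodPoly a b) k ≠ 0 ↔ b k ≠ 0 := fun k =>
    ⟨fun h h0 => h (funext fun l => by simp [col, prodPoly, h0]),
      fun h h0 => mul_ne_zero hi h (congrFun h0 i)⟩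
  have hs1 : supp1 (prodPoly a b) = {i | a i ≠ 0} := Set.ext hrow
  have hs2 : supp2 (prodPoly a b) = {j | b j ≠ 0} := Set.ext hcol
  refine le_antisymm ?_ (le_bchDelta hM fun p hp => ?_)
  · rw [bchDelta, if_neg hM]
    refine max_le ?_ ?_
    · rw [bchD1, bchOmega1, hs1]
      refine Nat.mul_le_mul_left _ (csSup_le ⟨_, Set.mem_image_of_mem _ (show i ∈ supp1 _ from (hrow i).2 hi)⟩ ?_)
      rintro _ ⟨k, hk, rfl⟩
      simp only [bchV]
      rw [if_neg (show row (prodPoly a b) k ≠ 0 from hk)]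
      have hk' : a k ≠ 0 := (hrow k).1 hk
      simp [row, prodPoly, hk']
    · rw [bchD2, bchOmega2, hs2, mul_comm]
      refine Nat.mul_le_mul_right _ (csSup_le ⟨_, Set.mem_image_of_mem _ (show j ∈ supp2 _ from (hcol j).2 hj)⟩ ?_)
      rintro _ ⟨k, hk, rfl⟩
      simp only [bchV]
      rw [if_neg (show col (prodPoly a b) k ≠ 0 from hk)]
      have hk' : b k ≠ 0 := (hcol k).1 hk
      simp [col, prodPoly, hk']
  · exact ⟨left_ne_zero_of_mul hp, right_ne_zero_of_mul hp⟩

/-! ### Divisors of `X^n - 1` -/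

theorem eval_toPoly {L : Type} [CommRing L] {n : ℕ} [NeZero n] (v : ZMod n → L) (x : L) :
    (toPoly v).eval x = evalV v x := by
  simp [toPoly, evalV, Polynomial.eval_finsetSum]

theorem coeff_toPoly {L : Type} [CommRing L] {n : ℕ} [NeZero n] (v : ZMod n → L) (i : ZMod n) :
    (toPoly v).coeff i.val = v i := by
  simp [toPoly, Polynomial.coeff_C_mul, Polynomial.coeff_X_pow,
    (ZMod.val_injective n).eq_iff]

theorem X_pow_sub_one_ne_zero {L : Type} [Field L] (n : ℕ) [NeZero n] :
    (X ^ n - 1 : Polynomial L) ≠ 0 := by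
  simpa using X_pow_sub_C_ne_zero (NeZero.pos n) (1 : L)

theorem ne_zero_of_dvd {L : Type} [Field L] {n : ℕ} [NeZero n] {a : ZMod n → L}
    (h : toPoly a ∣ (X ^ n - 1 : Polynomial L)) : a ≠ 0 := by
  rintro rfl
  have h0 : toPoly (0 : ZMod n → L) = 0 := by simp [toPoly]
  rw [h0, zero_dvd_iff] at h
  exact X_pow_sub_one_ne_zero n h

/-- For a divisor `a` of `X^n - 1` of degree `d`, the nonzeros of `a` among the `n`-th roots of
unity are roots of the cofactor, so there are at most `n - d` of them, while the `n - d - 1`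
coefficients of `a` above degree `d` vanish. -/
theorem wt_invDFT1_le {L : Type} [Field L] {n : ℕ} [NeZero n] {a : ZMod n → L}
    (hdvd : toPoly a ∣ (X ^ n - 1 : Polynomial L)) {β : L} (hβ : IsPrimitiveRoot β n) (h : ℕ) :
    wt (invDFT1 β (shiftBy h a)) ≤ bchOpt n {i | a i ≠ 0}ᶜ := by
  have ha0 := ne_zero_of_dvd hdvd
  obtain ⟨x, hx⟩ := Function.ne_iff.1 ha0
  obtain ⟨e, he⟩ := hdvd
  have hne := X_pow_sub_one_ne_zero (L := L) n
  have hmul := hne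
  rw [he] at hmul
  have hta : toPoly a ≠ 0 := left_ne_zero_of_mul hmul
  have hte : e ≠ 0 := right_ne_zero_of_mul hmul
  have hdeg : (toPoly a).natDegree + e.natDegree = n := by
    rw [← natDegree_mul hta hte, ← he]
    simpa using natDegree_X_pow_sub_C (n := n) (r := (1 : L))
  have hinv := hβ.inv
  have hroot : ∀ j : ZMod n, (β⁻¹ ^ j.val) ^ n = 1 := fun j => by
    rw [← pow_mul, mul_comm, pow_mul, hinv.pow_eq_one, one_pow]
  have hw : wt (invDFT1 β (shiftBy h a)) ≤ e.natDegree := by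
    refine le_trans (Finset.card_le_card_of_injOn (t := e.roots.toFinset)
      (fun j : ZMod n => β⁻¹ ^ j.val) ?_ (pow_val_injective hinv).injOn)
      ((Multiset.toFinset_card_le _).trans (card_roots' e))
    intro j hj
    have hj' : invDFT1 β (shiftBy h a) j ≠ 0 := by simpa using hj
    rw [invDFT1, evalV_shiftBy (hroot j)] at hj'
    have hev : evalV a (β⁻¹ ^ j.val) ≠ 0 :=
      right_ne_zero_of_mul (right_ne_zero_of_mul hj')
    have h0 := congrArg (Polynomial.eval (β⁻¹ ^ j.val)) he
    rw [eval_mul, eval_toPoly] at h0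
    simp only [eval_sub, eval_pow, eval_X, eval_one, hroot j, sub_self] at h0
    have := (mul_eq_zero.1 h0.symm).resolve_left hev
    exact Finset.mem_coe.2 (Multiset.mem_toFinset.2 ((mem_roots hte).2 this))
  refine hw.trans (le_bchOpt (x := x) (by simpa using hx) ?_)
  have hlt : (toPoly a).natDegree < n := by
    rw [Polynomial.natDegree_lt_iff_degree_lt hta, ← mem_degreeLT, toPoly]
    exact Submodule.sum_mem _ fun i _ => mem_degreeLT.2
      ((degree_C_mul_X_pow_le _ _).trans_lt (by exact_mod_cast ZMod.val_lt i))
  rcases Nat.lt_or_ge e.natDegree 2 with h2 | h2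
  · left; omega
  · refine Or.inr ⟨h2, (((toPoly a).natDegree + 1 : ℕ) : ZMod n), fun t ht => ?_⟩
    have hval : ((((toPoly a).natDegree + 1 + t : ℕ)) : ZMod n).val
        = (toPoly a).natDegree + 1 + t := ZMod.val_cast_of_lt (by omega)
    have := coeff_toPoly a (((toPoly a).natDegree + 1 + t : ℕ) : ZMod n)
    rw [hval, coeff_eq_zero_of_natDegree_lt (by omega)] at this
    rw [← Nat.cast_add]
    simpa using this.symm

/-! ### Descent to the base field -/

/-- The base field already contains all `q` roots of `X^q - X`. -/
theorem mem_range_of_pow_card {F L : Type} [Field F] [Fintype F] [Field L] [Algebra F L] {x : L}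
    (hx : x ^ Fintype.card F = x) : ∃ y : F, algebraMap F L y = x := by
  by_contra! h
  have hq : 1 < Fintype.card F := Fintype.one_lt_card
  have hne := FiniteField.X_pow_card_sub_X_ne_zero L hq
  have hsub : insert x (Finset.univ.image (algebraMap F L)) ⊆
      (X ^ Fintype.card F - X : Polynomial L).roots.toFinset := by
    intro z hz
    rw [Multiset.mem_toFinset, mem_roots hne]
    rcases Finset.mem_insert.1 hz with rfl | hz
    · simp [hx]
    · obtain ⟨y, _, rfl⟩ := Finset.mem_image.1 hz
      simp [← map_pow, FiniteField.pow_card]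
  have h1 := (Finset.card_le_card hsub).trans
    ((Multiset.toFinset_card_le _).trans (card_roots' _))
  rw [FiniteField.X_pow_card_sub_X_natDegree_eq L hq, Finset.card_insert_of_notMem (by
    simpa using h), Finset.card_image_of_injective _ (algebraMap F L).injective,
    Finset.card_univ] at h1
  omega

theorem invDFT1_mem_range {F L : Type} [Field F] [Fintype F] [Field L] [Algebra F L] {n : ℕ}
    [NeZero n] {α β : L} (hα : IsPrimitiveRoot α n) (hβ : IsPrimitiveRoot β n) (g : ZMod n → L)
    (hg : ∀ i : ZMod n, evalV g (α ^ i.val) ^ Fintype.card F = evalV g (α ^ i.val))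
    (j : ZMod n) : ∃ y : F, algebraMap F L y = invDFT1 β g j := by
  obtain ⟨i, hi, hij⟩ := hα.eq_pow_of_pow_eq_one (ξ := β⁻¹ ^ j.val) (by
    rw [← pow_mul, mul_comm, pow_mul, hβ.inv.pow_eq_one, one_pow])
  have h := hg (i : ZMod n)
  rw [ZMod.val_cast_of_lt hi, hij] at h
  obtain ⟨y, hy⟩ := mem_range_of_pow_card h
  exact ⟨(n : F)⁻¹ * y, by rw [map_mul, map_inv₀, map_natCast, hy, invDFT1]⟩

/-! ### The code generated by a tensor product -/

/-- The words whose transform is supported in a given set form an abelian code. -/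
theorem isAbelianCode2_support {F L : Type} [Field F] [Field L] [Algebra F L] {r₁ r₂ : ℕ}
    [NeZero r₁] [NeZero r₂] {α₁ α₂ : L} (hα₁ : α₁ ^ r₁ = 1) (hα₂ : α₂ ^ r₂ = 1)
    (S : Set (ZMod r₁ × ZMod r₂)) :
    IsAbelianCode2 {c : ZMod r₁ × ZMod r₂ → F | ∀ p, p ∉ S → dft2 α₁ α₂ c p = 0} := by
  have hpow : ∀ {n : ℕ} {x : L}, x ^ n = 1 → ∀ j : ℕ, (x ^ j) ^ n = 1 := fun {n x} hx j => by
    rw [← pow_mul, mul_comm, pow_mul, hx, one_pow]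
  refine ⟨fun p _ => by simp [dft2], fun u hu v hv p hp => ?_, fun x v hv p hp => ?_,
    fun v hv p hp => ?_, fun v hv p hp => ?_⟩
  · have : dft2 α₁ α₂ (u + v) p = dft2 α₁ α₂ u p + dft2 α₁ α₂ v p := by
      simp [dft2, add_mul, Finset.sum_add_distrib]
    rw [this, hu p hp, hv p hp, add_zero]
  · have : dft2 α₁ α₂ (x • v) p = algebraMap F L x * dft2 α₁ α₂ v p := by
      simp [dft2, Finset.mul_sum, mul_assoc]
    rw [this, hv p hp, mul_zero]
  · have : dft2 α₁ α₂ (shiftX v) p = α₁ ^ p.1.val * dft2 α₁ α₂ v p := by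
      simp only [dft2, Finset.mul_sum]
      rw [← Equiv.sum_comp (Equiv.addRight (((1 : ℕ) : ZMod r₁), (0 : ZMod r₂)))]
      refine Finset.sum_congr rfl fun k _ => ?_
      simp only [Equiv.coe_addRight, shiftX, Prod.fst_add, Prod.snd_add, add_zero,
        pow_val_add (hpow hα₁ _), pow_val_natCast (hpow hα₁ _)]
      simp only [Nat.cast_one, add_sub_cancel_right]
      ring
    rw [this, hv p hp, mul_zero]
  · have : dft2 α₁ α₂ (shiftY v) p = α₂ ^ p.2.val * dft2 α₁ α₂ v p := by
      simp only [dft2, Finset.mul_sum]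
      rw [← Equiv.sum_comp (Equiv.addRight ((0 : ZMod r₁), ((1 : ℕ) : ZMod r₂)))]
      refine Finset.sum_congr rfl fun k _ => ?_
      simp only [Equiv.coe_addRight, shiftY, Prod.fst_add, Prod.snd_add, add_zero,
        pow_val_add (hpow hα₂ _), pow_val_natCast (hpow hα₂ _)]
      simp only [Nat.cast_one, add_sub_cancel_right]
      ring
    rw [this, hv p hp, mul_zero]

theorem dft2_tensor {F L : Type} [Field F] [Field L] [Algebra F L] {r₁ r₂ : ℕ}
    [NeZero r₁] [NeZero r₂] (α₁ α₂ : L) {c : ZMod r₁ × ZMod r₂ → F} {u : ZMod r₁ → L}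
    {v : ZMod r₂ → L} (hc : ∀ p, algebraMap F L (c p) = u p.1 * v p.2)
    (k : ZMod r₁ × ZMod r₂) :
    dft2 α₁ α₂ c k = evalV u (α₁ ^ k.1.val) * evalV v (α₂ ^ k.2.val) := by
  simp only [dft2, evalV, Fintype.sum_prod_type, Finset.sum_mul_sum, hc]
  refine Finset.sum_congr rfl fun i _ => Finset.sum_congr rfl fun j _ => ?_
  ring

theorem wt_tensor {F L : Type} [Field F] [Field L] [Algebra F L] {r₁ r₂ : ℕ}
    [NeZero r₁] [NeZero r₂] {c : ZMod r₁ × ZMod r₂ → F} {u : ZMod r₁ → L}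
    {v : ZMod r₂ → L} (hc : ∀ p, algebraMap F L (c p) = u p.1 * v p.2) :
    wt c = wt u * wt v := by
  simp only [wt]
  rw [← Finset.card_product]
  congr 1
  ext p
  have h : c p ≠ 0 ↔ u p.1 * v p.2 ≠ 0 := by
    rw [← hc p]; simp
  simp only [Finset.mem_filter, Finset.mem_univ, true_and, Finset.mem_product]
  rw [h, mul_ne_zero_iff]

/-- If the values `(X_i^{h_i}·a)(α_i^j)` are fixed by the `q`-power
(Frobenius) map, then for every pair of primitive roots `(β₁,β₂)` the abelian code
generated by `φ⁻¹_{β₁,X₁^{h₁}a}·φ⁻¹_{β₂,X₂^{h₂}b}` satisfies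
`Δ(M(ab)) = Δ(C) = d(C)`. -/
theorem stmt_17 {F : Type} [Field F] [Fintype F] {L : Type} [Field L] [Algebra F L]
    (r₁ r₂ : ℕ) [NeZero r₁] [NeZero r₂]
    (hr₁ : Nat.Coprime r₁ (Fintype.card F)) (hr₂ : Nat.Coprime r₂ (Fintype.card F))
    (K : IntermediateField F L)
    (a : ZMod r₁ → L) (b : ZMod r₂ → L)
    (haK : ∀ i, a i ∈ K) (hbK : ∀ j, b j ∈ K)
    (hadvd : toPoly a ∣ (Polynomial.X ^ r₁ - 1 : Polynomial L))
    (hbdvd : toPoly b ∣ (Polynomial.X ^ r₂ - 1 : Polynomial L))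
    (α₁ α₂ : L) (hα₁ : IsPrimitiveRoot α₁ r₁) (hα₂ : IsPrimitiveRoot α₂ r₂)
    (h₁ : ZMod r₁) (h₂ : ZMod r₂)
    (hqa : ∀ i : ZMod r₁,
      (evalV (shiftBy h₁.val a) (α₁ ^ i.val)) ^ (Fintype.card F)
        = evalV (shiftBy h₁.val a) (α₁ ^ i.val))
    (hqb : ∀ j : ZMod r₂,
      (evalV (shiftBy h₂.val b) (α₂ ^ j.val)) ^ (Fintype.card F)
        = evalV (shiftBy h₂.val b) (α₂ ^ j.val)) :
    ∀ β₁ β₂ : L, IsPrimitiveRoot β₁ r₁ → IsPrimitiveRoot β₂ r₂ →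
      ∃ cβ : ZMod r₁ × ZMod r₂ → F,
        (∀ p, algebraMap F L (cβ p) =
            invDFT1 β₁ (shiftBy h₁.val a) p.1 * invDFT1 β₂ (shiftBy h₂.val b) p.2) ∧
        bchDelta (prodPoly a b) = bchDeltaCode2 L (codeGen2 cβ) ∧
        bchDeltaCode2 L (codeGen2 cβ) = minDist (codeGen2 cβ) := by
  intro β₁ β₂ hβ₁ hβ₂
  choose y₁ hy₁ using invDFT1_mem_range hα₁ hβ₁ _ hqa
  choose y₂ hy₂ using invDFT1_mem_range hα₂ hβ₂ _ hqb
  have hc : ∀ p : ZMod r₁ × ZMod r₂, algebraMap F L (y₁ p.1 * y₂ p.2) =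
      invDFT1 β₁ (shiftBy h₁.val a) p.1 * invDFT1 β₂ (shiftBy h₂.val b) p.2 := fun p => by
    rw [map_mul, hy₁, hy₂]
  refine ⟨fun p => y₁ p.1 * y₂ p.2, hc, ?_⟩
  set c : ZMod r₁ × ZMod r₂ → F := fun p => y₁ p.1 * y₂ p.2
  have ha := ne_zero_of_dvd hadvd
  have hb := ne_zero_of_dvd hbdvd
  have hdft : ∀ p, dft2 β₁ β₂ c p = shiftBy h₁.val a p.1 * shiftBy h₂.val b p.2 := fun p => by
    rw [dft2_tensor β₁ β₂ hc, evalV_invDFT1 hβ₁, evalV_invDFT1 hβ₂]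
  have hmem : c ∈ codeGen2 c := Set.mem_sInter.2 fun S hS => hS.2
  have hc0 : c ≠ 0 := by
    obtain ⟨i, hi⟩ := Function.ne_iff.1 ha
    obtain ⟨j, hj⟩ := Function.ne_iff.1 hb
    intro h0
    have h := hdft (i + (h₁.val : ZMod r₁), j + (h₂.val : ZMod r₂))
    rw [h0] at h
    simp only [shiftBy, add_sub_cancel_right] at h
    exact mul_ne_zero hi hj (by rw [← h]; simp [dft2])
  -- `d(C)` is at most the weight of the generator, hence at most `Δ(M(ab))`.
  have hd : minDist (codeGen2 c) ≤ bchDelta (prodPoly a b) := by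
    refine le_trans (b := wt c) (Nat.sInf_le ⟨c, ⟨hmem, hc0⟩, rfl⟩) ?_
    rw [wt_tensor hc, bchDelta_prodPoly ha hb]
    exact Nat.mul_le_mul (wt_invDFT1_le hadvd hβ₁ _) (wt_invDFT1_le hbdvd hβ₂ _)
  have hAt : ∀ γ₁ γ₂ : L, IsPrimitiveRoot γ₁ r₁ → IsPrimitiveRoot γ₂ r₂ →
      bchDeltaCodeAt2 γ₁ γ₂ (codeGen2 c) ≤ minDist (codeGen2 c) := by
    intro γ₁ γ₂ hγ₁ hγ₂
    refine le_csInf ⟨_, c, ⟨hmem, hc0⟩, rfl⟩ ?_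
    rintro _ ⟨w, ⟨hw, hw0⟩, rfl⟩
    exact le_trans (b := bchDelta (dft2 γ₁ γ₂ w)) (Nat.sInf_le ⟨w, hw, hw0, rfl⟩)
      (bchDelta_le_wt hγ₁ hγ₂ w)
  have hup : bchDeltaCode2 L (codeGen2 c) ≤ minDist (codeGen2 c) := by
    refine csSup_le ⟨_, β₁, β₂, hβ₁, hβ₂, rfl⟩ ?_
    rintro _ ⟨γ₁, γ₂, hγ₁, hγ₂, rfl⟩
    exact hAt γ₁ γ₂ hγ₁ hγ₂
  -- Every word of `C` has its transform at `(β₁,β₂)` supported where that of the generator is.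
  have hlow : bchDelta (prodPoly a b) ≤ bchDeltaCode2 L (codeGen2 c) := by
    refine le_trans ?_ (le_csSup ⟨minDist (codeGen2 c), ?_⟩ ⟨β₁, β₂, hβ₁, hβ₂, rfl⟩)
    · refine le_csInf ⟨_, c, hmem, hc0, rfl⟩ ?_
      rintro _ ⟨w, hw, hw0, rfl⟩
      rw [bchDelta_prodPoly ha hb]
      refine (Nat.mul_le_mul (bchOpt_shiftBy h₁.val ha) (bchOpt_shiftBy h₂.val hb)).trans
        (le_bchDelta (dft2_ne_zero hβ₁ hβ₂ hw0) fun p hp => ?_)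
      have hS := Set.mem_sInter.1 hw _
        ⟨isAbelianCode2_support hβ₁.pow_eq_one hβ₂.pow_eq_one {p | dft2 β₁ β₂ c p ≠ 0},
          fun p hp => by simpa using hp⟩
      have hcp : dft2 β₁ β₂ c p ≠ 0 := by
        by_contra h0
        exact hp (hS p (by simpa using h0))
      rw [hdft] at hcp
      exact ⟨left_ne_zero_of_mul hcp, right_ne_zero_of_mul hcp⟩
    · rintro _ ⟨γ₁, γ₂, hγ₁, hγ₂, rfl⟩
      exact hAt γ₁ γ₂ hγ₁ hγ₂
  exact ⟨le_antisymm hlow (hup.trans hd), le_antisymm hup (hd.trans hlow)⟩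
end
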